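/- arXiv:0805.1657 — 2 statements merged into one kernel-verified Lean document; each statement's English description precedes it below -/
import Mathlib

section
/- Let $K$ be a field and $n \geq 4$ with $n \equiv 1 \pmod 3$. Then $\beta_{(2n+1)/3,\, n}(R/I(C_n)) = 1$, and the projective dimension of $R/I(C_n)$ equals $\frac{2n+1}{3}$. -/
open MvPolynomial

/-- The edge ideal `I(Cₙ)` of the `n`-cycle, vertices indexed by `ZMod n`. -/
noncomputable def cycleIdeal (K : Type) [Field K] (n : ℕ) :
    Ideal (MvPolynomial (ZMod n) K) :=
  Ideal.span (Set.range fun i : ZMod n => X i * X (i + 1))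

/-- The graded free module `⨁ⱼ R(-j)^(b j)` over `R = K[x₁,…,xₙ]`: the free module on
the index set `Σ j, Fin (b j)`, a generator with first component `j` being thought of as
having degree `j`. -/
abbrev GradedFreeMod (K : Type) [Field K] (n : ℕ) (b : ℕ → ℕ) : Type :=
  (Σ j : ℕ, Fin (b j)) →₀ MvPolynomial (ZMod n) K

/-- An element of `⨁ⱼ R(-j)^(b j)` is homogeneous of degree `d` if its coordinate at
each generator of degree `j` is a homogeneous polynomial of degree `d - j` (and vanishes
if `j > d`). -/
def IsHomogElem {K : Type} [Field K] {n : ℕ} {b : ℕ → ℕ} (d : ℕ)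
    (f : GradedFreeMod K n b) : Prop :=
  ∀ s : Σ j : ℕ, Fin (b j),
    MvPolynomial.IsHomogeneous (f s) (d - s.1) ∧ (f s ≠ 0 → s.1 ≤ d)

/-- A linear map of graded free modules is graded (of degree `0`) if it preserves
homogeneous elements and their degrees. -/
def IsGradedMap {K : Type} [Field K] {n : ℕ} {b b' : ℕ → ℕ}
    (φ : GradedFreeMod K n b →ₗ[MvPolynomial (ZMod n) K] GradedFreeMod K n b') : Prop :=
  ∀ d f, IsHomogElem d f → IsHomogElem d (φ f)

/-- The irrelevant maximal ideal `(x₁,…,xₙ)`. -/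
noncomputable def irrelevantIdeal (K : Type) [Field K] (n : ℕ) :
    Ideal (MvPolynomial (ZMod n) K) :=
  Ideal.span (Set.range (X : ZMod n → MvPolynomial (ZMod n) K))

/-- A minimal graded free resolution of `R/I` with graded Betti numbers `β i j`:
an exact sequence `⋯ → F₁ → F₀ → R/I → 0` of graded free modules `Fᵢ = ⨁ⱼ R(-j)^(β i j)`
with degree‑zero graded differentials whose images lie in `m·Fᵢ`, where `m = (x₁,…,xₙ)`.
The graded Betti numbers `β_{i,j}(R/I) = dim_K Tor_i(R/I, K)_j` may be read off any such
resolution. -/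
structure MinimalGradedFreeResolution (K : Type) [Field K] (n : ℕ)
    (I : Ideal (MvPolynomial (ZMod n) K)) (β : ℕ → ℕ → ℕ) : Type where
  /-- the differentials of the resolution -/
  d : ∀ i : ℕ, GradedFreeMod K n (β (i + 1)) →ₗ[MvPolynomial (ZMod n) K]
    GradedFreeMod K n (β i)
  /-- the augmentation `F₀ → R/I` -/
  aug : GradedFreeMod K n (β 0) →ₗ[MvPolynomial (ZMod n) K] (MvPolynomial (ZMod n) K ⧸ I)
  aug_surjective : Function.Surjective aug
  exact_at_zero : LinearMap.ker aug = LinearMap.range (d 0)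
  exact : ∀ i : ℕ, LinearMap.ker (d i) = LinearMap.range (d (i + 1))
  graded : ∀ i : ℕ, IsGradedMap (d i)
  aug_graded : ∀ (dd : ℕ) (f : GradedFreeMod K n (β 0)), IsHomogElem dd f →
    ∃ p : MvPolynomial (ZMod n) K, p.IsHomogeneous dd ∧ aug f = Ideal.Quotient.mk I p
  minimal : ∀ i : ℕ, LinearMap.range (d i) ≤
    irrelevantIdeal K n • (⊤ : Submodule (MvPolynomial (ZMod n) K) (GradedFreeMod K n (β i)))

/-- Projective dimension of an `R`-module `M`, characterized via vanishing of the
`Ext` functors: the least `d` such that `Ext^i(M, N) = 0` for all `i > d` and all `N`. -/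
noncomputable def projDim (R : Type) [CommRing R] (M : Type) [AddCommGroup M]
    [Module R M] : ℕ∞ :=
  sInf {d : ℕ∞ | ∀ i : ℕ, d < i → ∀ N : ModuleCat R,
    Subsingleton (((Ext R (ModuleCat R) i).obj (Opposite.op (ModuleCat.of R M))).obj N)}

open CategoryTheory

section GradedFunctors

/-- The category whose objects are degrees and whose morphisms `a ⟶ b` are the monomials of
degree `b - a` in the variables `σ`. Functors from it to `K`-vector spaces are `ℕ`-graded modules
over `K[σ]`. -/
structure MonomialCat (σ : Type) where
  /-- the degree -/
  deg : ℕ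

noncomputable instance (σ : Type) : Category (MonomialCat σ) where
  Hom a b := {u : σ →₀ ℕ // a.deg + u.degree = b.deg}
  id a := ⟨0, by simp⟩
  comp u v := ⟨u.1 + v.1, by rw [map_add, ← add_assoc, u.2, v.2]⟩
  id_comp u := Subtype.ext (zero_add _)
  comp_id u := Subtype.ext (add_zero _)
  assoc u v w := Subtype.ext (add_assoc _ _ _)

variable {σ K : Type} [Field K]

/-- A family of subspaces of a `K[σ]`-module, compatible with degrees of monomials. -/
structure MonomialGrading (σ K M : Type) [Field K] [AddCommGroup M] [Module K M]
    [Module (MvPolynomial σ K) M] where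
  /-- the homogeneous elements of each degree -/
  piece : ℕ → Submodule K M
  smul_mem : ∀ {a b : ℕ} (u : σ →₀ ℕ) (x : M), x ∈ piece a → a + u.degree = b →
    monomial u (1 : K) • x ∈ piece b

namespace MonomialGrading

variable {M N P : Type} [AddCommGroup M] [Module K M] [Module (MvPolynomial σ K) M]
  [IsScalarTower K (MvPolynomial σ K) M]
  [AddCommGroup N] [Module K N] [Module (MvPolynomial σ K) N]
  [IsScalarTower K (MvPolynomial σ K) N]
  [AddCommGroup P] [Module K P] [Module (MvPolynomial σ K) P]
  [IsScalarTower K (MvPolynomial σ K) P]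

/-- Multiplication by a monomial, between homogeneous pieces. -/
noncomputable def act (G : MonomialGrading σ K M) {a b : ℕ} (u : σ →₀ ℕ) (h : a + u.degree = b) :
    G.piece a →ₗ[K] G.piece b where
  toFun x := ⟨monomial u (1 : K) • x.1, G.smul_mem u x.1 x.2 h⟩
  map_add' _ _ := Subtype.ext (smul_add _ _ _)
  map_smul' c x := Subtype.ext (smul_comm (monomial u (1 : K)) c x.1)

/-- The functor of homogeneous pieces. -/
noncomputable def functor (G : MonomialGrading σ K M) : MonomialCat σ ⥤ ModuleCat.{0} K where
  obj a := ModuleCat.of K (G.piece a.deg)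
  map u := ModuleCat.ofHom (G.act u.1 u.2)
  map_id a := by
    ext x
    exact one_smul _ x.1
  map_comp u v := by
    ext x
    change monomial (u.1 + v.1) (1 : K) • x.1 = monomial v.1 (1 : K) • monomial u.1 (1 : K) • x.1
    rw [smul_smul, monomial_mul, one_mul, add_comm]

/-- The natural transformation induced by a degree preserving linear map. -/
noncomputable def map (G : MonomialGrading σ K M) (H : MonomialGrading σ K N)
    (φ : M →ₗ[MvPolynomial σ K] N) (h : ∀ b x, x ∈ G.piece b → φ x ∈ H.piece b) :
    G.functor ⟶ H.functor where
  app a := ModuleCat.ofHom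
    ((φ.restrictScalars K).restrict (p := G.piece a.deg) (q := H.piece a.deg) (h a.deg))
  naturality a b u := by
    ext x
    exact Subtype.ext (map_smul φ _ _)

end MonomialGrading

lemma exact_of_forall_evaluation {C : Type} [SmallCategory C]
    (S : ShortComplex (C ⥤ ModuleCat.{0} K))
    (h : ∀ c, (S.map ((evaluation C (ModuleCat.{0} K)).obj c)).Exact) : S.Exact := by
  rw [ShortComplex.exact_iff_isZero_homology, Functor.isZero_iff]
  intro c
  have := (ShortComplex.exact_iff_isZero_homology _).1 (h c)
  exact this.of_iso (S.mapHomologyIso ((evaluation C (ModuleCat.{0} K)).obj c)).symm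

/-- A short complex of functors to vector spaces that is pointwise short exact is short exact. -/
lemma shortExact_of_forall_app {C : Type} [SmallCategory C]
    (S : ShortComplex (C ⥤ ModuleCat.{0} K))
    (hf : ∀ c, Function.Injective (S.f.app c).hom)
    (he : ∀ c x, (S.g.app c).hom x = 0 → ∃ y, (S.f.app c).hom y = x)
    (hg : ∀ c, Function.Surjective (S.g.app c).hom) : S.ShortExact := by
  have h1 : ∀ c, Mono (S.f.app c) := fun c => (ModuleCat.mono_iff_injective _).2 (hf c)
  have h2 : ∀ c, Epi (S.g.app c) := fun c => (ModuleCat.epi_iff_surjective _).2 (hg c)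
  exact { exact := exact_of_forall_evaluation S fun c =>
            (ShortComplex.moduleCat_exact_iff _).2 (he c)
          mono_f := NatTrans.mono_of_mono_app _
          epi_g := NatTrans.epi_of_epi_app _ }

end GradedFunctors

section ExtConnecting

open Abelian

universe w v u

variable {K : Type} [Field K] {C : Type u} [Category.{v} C] [Abelian C] [Linear K C]
  [HasExt.{w} C] {S : ShortComplex C}

lemma CategoryTheory.ShortComplex.ShortExact.subsingleton_ext_X₃ (hS : S.ShortExact) (Y : C)
    (i : ℕ) (h₂ : Subsingleton (Ext S.X₂ Y i))
    (h₁ : ∀ k, k + 1 = i → Subsingleton (Ext S.X₁ Y k)) : Subsingleton (Ext S.X₃ Y i) := by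
  refine subsingleton_of_forall_eq 0 fun x => ?_
  cases i with
  | zero =>
    have := hS.epi_g
    exact Ext.precomp_mk₀_injective_of_epi Y S.g (Subsingleton.elim _ _)
  | succ k =>
    obtain ⟨y, rfl⟩ := Ext.contravariant_sequence_exact₃ hS Y x (Subsingleton.elim _ _)
      (n₀ := k) (add_comm _ _)
    have := h₁ k rfl
    rw [Subsingleton.elim y 0, Ext.comp_zero]

variable (K) in
/-- The connecting homomorphism is an isomorphism when the neighbouring maps vanish. -/
lemma CategoryTheory.ShortComplex.ShortExact.nonempty_ext_linearEquiv (hS : S.ShortExact) (Y : C)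
    (i : ℕ) (h₁ : ∀ x : Ext S.X₂ Y i, (Ext.mk₀ S.f).comp x (zero_add i) = 0)
    (h₂ : Subsingleton (Ext S.X₂ Y (i + 1))) :
    Nonempty (Ext S.X₁ Y i ≃ₗ[K] Ext S.X₃ Y (i + 1)) := by
  let δ := Ext.bilinearCompOfLinear K S.X₃ S.X₁ Y 1 i (i + 1) (add_comm _ _) hS.extClass
  refine ⟨LinearEquiv.ofBijective δ ⟨?_, ?_⟩⟩
  · rw [injective_iff_map_eq_zero]
    intro x hx
    obtain ⟨y, rfl⟩ := Ext.contravariant_sequence_exact₁ hS Y x (add_comm _ _) hx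
    exact h₁ y
  · intro x
    exact Ext.contravariant_sequence_exact₃ hS Y x (Subsingleton.elim _ _) (add_comm _ _)

end ExtConnecting

section MonomialQuotients

variable {σ K : Type} [Field K]

noncomputable instance : HasExt.{1} (MonomialCat σ ⥤ ModuleCat.{0} K) := HasExt.standard _

variable (σ K) in
/-- The polynomials which are homogeneous of degree `b` when `1` is given degree `a`. -/
noncomputable def shiftedPiece (a b : ℕ) : Submodule K (MvPolynomial σ K) :=
  restrictSupport K {u | a + u.degree = b}

lemma mem_shiftedPiece {a b : ℕ} {p : MvPolynomial σ K} :
    p ∈ shiftedPiece σ K a b ↔ ∀ u, coeff u p ≠ 0 → a + u.degree = b := by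
  simp [shiftedPiece, mem_restrictSupport_iff, Set.subset_def]

lemma mem_restrictSupportIdeal {U : Set (σ →₀ ℕ)} {hU : IsUpperSet U} {p : MvPolynomial σ K} :
    p ∈ restrictSupportIdeal (R := K) U hU ↔ ∀ u, coeff u p ≠ 0 → u ∈ U := by
  change p ∈ restrictSupport K U ↔ _
  simp [mem_restrictSupport_iff, Set.subset_def]

lemma monomial_mul_mem_shiftedPiece {a a' b : ℕ} (u : σ →₀ ℕ) {p : MvPolynomial σ K}
    (hp : p ∈ shiftedPiece σ K a' b) {b' : ℕ} (h : ∀ v : σ →₀ ℕ, a' + v.degree = b →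
      a + (u + v).degree = b') :
    monomial u 1 * p ∈ shiftedPiece σ K a b' := by
  rw [mem_shiftedPiece] at hp ⊢
  intro v hv
  rw [coeff_monomial_mul'] at hv
  split_ifs at hv with huv
  · rw [one_mul] at hv
    rw [← h _ (hp _ hv), add_tsub_cancel_of_le huv]
  · exact absurd rfl hv

/-- The grading of `(K[σ] ⧸ J)(-a)`. -/
noncomputable def quotientGrading (J : Ideal (MvPolynomial σ K)) (a : ℕ) :
    MonomialGrading σ K (MvPolynomial σ K ⧸ J) where
  piece b := (shiftedPiece σ K a b).map (Ideal.Quotient.mkₐ K J).toLinearMap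
  smul_mem := by
    rintro b b' u _ ⟨p, hp, rfl⟩ h
    refine ⟨monomial u 1 * p, monomial_mul_mem_shiftedPiece u hp ?_, rfl⟩
    intro v hv
    rw [map_add]
    omega

lemma mem_quotientGrading {J : Ideal (MvPolynomial σ K)} {a b : ℕ} {x : MvPolynomial σ K ⧸ J} :
    x ∈ (quotientGrading J a).piece b ↔
      ∃ p ∈ shiftedPiece σ K a b, Ideal.Quotient.mk J p = x := Iff.rfl

/-- The functor of `(K[σ] ⧸ J)(-a)`, where `J` is spanned by the monomials with exponent in `U`. -/
noncomputable abbrev monomialQuotient (K : Type) [Field K] {U : Set (σ →₀ ℕ)} (hU : IsUpperSet U)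
    (a : ℕ) : MonomialCat σ ⥤ ModuleCat.{0} K :=
  (quotientGrading (restrictSupportIdeal (R := K) U hU) a).functor

/-- The exact sequence `0 → (R ⧸ (J : m))(-deg m) → R ⧸ J → R ⧸ (J + (m)) → 0` for a monomial ideal
`J` and a monomial `m`. -/
lemma exists_shortExact_monomialQuotient {U U' U'' : Set (σ →₀ ℕ)} (hU : IsUpperSet U)
    (hU' : IsUpperSet U') (hU'' : IsUpperSet U'') (m : σ →₀ ℕ)
    (h' : ∀ u, m + u ∈ U ↔ u ∈ U') (h'' : ∀ u, u ∈ U'' ↔ u ∈ U ∨ m ≤ u) (a : ℕ) :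
    ∃ (f : monomialQuotient K hU' (a + m.degree) ⟶ monomialQuotient K hU a)
      (g : monomialQuotient K hU a ⟶ monomialQuotient K hU'' a) (w : f ≫ g = 0),
      (ShortComplex.mk f g w).ShortExact := by
  have key : ∀ p : MvPolynomial σ K, monomial m 1 * p ∈ restrictSupportIdeal (R := K) U hU ↔
      p ∈ restrictSupportIdeal (R := K) U' hU' := by
    intro p
    simp only [mem_restrictSupportIdeal, coeff_monomial_mul', ← h']
    constructor
    · intro h u hu
      exact h _ (by simpa using hu)
    · intro h u hu
      split_ifs at hu with hmu
      · simpa [add_tsub_cancel_of_le hmu] using h (u - m) (by simpa using hu)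
      · exact absurd rfl hu
  let φ : (MvPolynomial σ K ⧸ restrictSupportIdeal (R := K) U' hU') →ₗ[MvPolynomial σ K]
      (MvPolynomial σ K ⧸ restrictSupportIdeal (R := K) U hU) :=
    Submodule.mapQ _ _ (LinearMap.mulLeft _ (monomial m 1)) fun p hp => (key p).2 hp
  let ψ : (MvPolynomial σ K ⧸ restrictSupportIdeal (R := K) U hU) →ₗ[MvPolynomial σ K]
      (MvPolynomial σ K ⧸ restrictSupportIdeal (R := K) U'' hU'') :=
    Submodule.mapQ _ _ LinearMap.id fun p hp => by
      have hp' := mem_restrictSupportIdeal.1 hp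
      exact (mem_restrictSupportIdeal (hU := hU'')).2 fun u hu => (h'' u).2 (Or.inl (hp' u hu))
  have hφ : ∀ b x, x ∈ (quotientGrading (restrictSupportIdeal (R := K) U' hU')
      (a + m.degree)).piece b →
      φ x ∈ (quotientGrading (restrictSupportIdeal (R := K) U hU) a).piece b := by
    rintro b _ ⟨p, hp, rfl⟩
    refine ⟨monomial m 1 * p, monomial_mul_mem_shiftedPiece m hp ?_, rfl⟩
    intro v hv
    rw [map_add]
    omega
  have hψ : ∀ b x, x ∈ (quotientGrading (restrictSupportIdeal (R := K) U hU) a).piece b →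
      ψ x ∈ (quotientGrading (restrictSupportIdeal (R := K) U'' hU'') a).piece b := by
    rintro b _ ⟨p, hp, rfl⟩
    exact ⟨p, hp, rfl⟩
  have hψφ : ∀ x, ψ (φ x) = 0 := by
    intro x
    obtain ⟨p, rfl⟩ := Ideal.Quotient.mk_surjective x
    refine Ideal.Quotient.eq_zero_iff_mem.2 (mem_restrictSupportIdeal.2 fun u hu => ?_)
    refine (h'' u).2 (Or.inr ?_)
    by_contra hmu
    exact hu ((coeff_monomial_mul' _ _ _ _).trans (if_neg hmu))
  refine ⟨MonomialGrading.map _ _ φ hφ, MonomialGrading.map _ _ ψ hψ, ?_, ?_⟩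
  · ext b x
    exact Subtype.ext (hψφ x.1)
  · refine shortExact_of_forall_app _ (fun b => ?_) (fun b x hx => ?_) (fun b x => ?_)
    · refine (injective_iff_map_eq_zero _).2 ?_
      rintro ⟨_, p, hp, rfl⟩ hx
      have h0 : Ideal.Quotient.mk (restrictSupportIdeal (R := K) U hU) (monomial m 1 * p) = 0 :=
        congrArg Subtype.val hx
      refine Subtype.ext (Ideal.Quotient.eq_zero_iff_mem.2 ((key p).1 ?_))
      exact Ideal.Quotient.eq_zero_iff_mem.1 h0
    · obtain ⟨_, p, hp, rfl⟩ := x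
      have h0 : Ideal.Quotient.mk (restrictSupportIdeal (R := K) U'' hU'') p = 0 :=
        congrArg Subtype.val hx
      have hp'' := mem_restrictSupportIdeal.1 (Ideal.Quotient.eq_zero_iff_mem.1 h0)
      have hpb := mem_shiftedPiece.1 hp
      refine ⟨⟨Ideal.Quotient.mk _ (p.divMonomial m), p.divMonomial m, ?_, rfl⟩, Subtype.ext ?_⟩
      · refine mem_shiftedPiece.2 fun u hu => ?_
        rw [coeff_divMonomial] at hu
        rw [← hpb _ hu, map_add, add_assoc]
      · change Ideal.Quotient.mk (restrictSupportIdeal (R := K) U hU)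
          (monomial m 1 * p.divMonomial m) = Ideal.Quotient.mk _ p
        refine Ideal.Quotient.eq.2 ?_
        rw [← neg_mem_iff, neg_sub]
        have : p - monomial m 1 * p.divMonomial m = p.modMonomial m := by
          rw [sub_eq_iff_eq_add, add_comm, divMonomial_add_modMonomial]
        rw [this, mem_restrictSupportIdeal]
        intro u hu
        by_cases hmu : m ≤ u
        · exact absurd (coeff_modMonomial_of_le _ hmu) hu
        · rw [coeff_modMonomial_of_not_le _ hmu] at hu
          exact ((h'' u).1 (hp'' u hu)).resolve_right hmu
    · obtain ⟨_, p, hp, rfl⟩ := x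
      exact ⟨⟨Ideal.Quotient.mk _ p, p, hp, rfl⟩, rfl⟩

end MonomialQuotients

section FreeGrading

variable {σ K : Type} [Field K] {ι : Type}

variable (σ K) in
/-- The grading of the free module with basis elements of prescribed degrees. -/
noncomputable def freeGrading (deg : ι → ℕ) :
    MonomialGrading σ K (ι →₀ MvPolynomial σ K) where
  piece b := ⨅ s, (shiftedPiece σ K (deg s) b).comap (Finsupp.lapply s)
  smul_mem := by
    intro b b' u f hf h
    simp only [Submodule.mem_iInf, Submodule.mem_comap, Finsupp.lapply_apply] at hf ⊢
    intro s
    refine monomial_mul_mem_shiftedPiece u (hf s) fun v hv => ?_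
    rw [map_add]
    omega

lemma mem_freeGrading {deg : ι → ℕ} {b : ℕ} {f : ι →₀ MvPolynomial σ K} :
    f ∈ (freeGrading σ K deg).piece b ↔ ∀ s, f s ∈ shiftedPiece σ K (deg s) b := by
  simp [freeGrading]

lemma single_monomial_mem_freeGrading {deg : ι → ℕ} {b : ℕ} {s : ι} {u : σ →₀ ℕ}
    (h : deg s + u.degree = b) :
    Finsupp.single s (monomial u (1 : K)) ∈ (freeGrading σ K deg).piece b := by
  classical
  rw [mem_freeGrading]
  intro t
  rw [Finsupp.single_apply]
  split_ifs with hst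
  · subst hst
    exact (monomial_mem_restrictSupport (R := K)).2 (Or.inl h)
  · exact zero_mem _

lemma freeGrading_piece_eq_span (deg : ι → ℕ) (b : ℕ) :
    (freeGrading σ K deg).piece b = Submodule.span K
      {f | ∃ s u, deg s + u.degree = b ∧ f = Finsupp.single s (monomial u (1 : K))} := by
  refine le_antisymm (fun f hf => ?_) (Submodule.span_le.2 ?_)
  · rw [mem_freeGrading] at hf
    rw [← Finsupp.sum_single f]
    refine Submodule.sum_mem _ fun s _ => ?_
    have h := hf s
    rw [shiftedPiece, restrictSupport_eq_span] at h
    have h2 := Submodule.mem_map_of_mem (f := Finsupp.lsingle (R := K) s) h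
    rw [Submodule.map_span] at h2
    refine Submodule.span_mono ?_ h2
    rintro _ ⟨_, ⟨u, hu, rfl⟩, rfl⟩
    exact ⟨s, u, hu, rfl⟩
  · rintro _ ⟨s, u, h, rfl⟩
    exact single_monomial_mem_freeGrading h

lemma linearMap_ext_of_eq_span {M V : Type} [AddCommGroup M] [Module K M] [AddCommGroup V]
    [Module K V] {Q : Submodule K M} {S : Set M} (hQ : Q = Submodule.span K S) {L L' : Q →ₗ[K] V}
    (h : ∀ x (hx : x ∈ Q), x ∈ S → L ⟨x, hx⟩ = L' ⟨x, hx⟩) : L = L' := by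
  subst hQ
  exact LinearMap.ext_on Submodule.span_span_coe_preimage fun x hx => h x.1 x.2 hx

lemma freeGrading_linearMap_ext {deg : ι → ℕ} {b : ℕ} {V : Type} [AddCommGroup V] [Module K V]
    {L L' : (freeGrading σ K deg).piece b →ₗ[K] V}
    (h : ∀ (s : ι) (u : σ →₀ ℕ) (hu : deg s + u.degree = b),
      L ⟨_, single_monomial_mem_freeGrading hu⟩ =
        L' ⟨_, single_monomial_mem_freeGrading hu⟩) : L = L' := by
  refine linearMap_ext_of_eq_span (freeGrading_piece_eq_span deg b) ?_
  rintro _ _ ⟨s, u, hu, rfl⟩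
  exact h s u hu

/-- The basis element indexed by `s`. -/
noncomputable def freeGradingBasis (deg : ι → ℕ) (s : ι) :
    (freeGrading σ K deg).piece (deg s) :=
  ⟨Finsupp.single s (monomial 0 1), single_monomial_mem_freeGrading (by simp)⟩

variable (N : MonomialCat σ ⥤ ModuleCat.{0} K)

/-- Multiplication by a monomial on a functor, extended by zero when degrees do not match. -/
noncomputable def monomialAct (u : σ →₀ ℕ) (a b : ℕ) : N.obj ⟨a⟩ →ₗ[K] N.obj ⟨b⟩ :=
  open Classical in
  if h : a + u.degree = b then
    (N.map (X := ⟨a⟩) (Y := ⟨b⟩) (show (⟨a⟩ : MonomialCat σ) ⟶ ⟨b⟩ from ⟨u, h⟩)).hom else 0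

lemma monomialAct_of_eq {u : σ →₀ ℕ} {a b : ℕ} (h : a + u.degree = b) :
    monomialAct N u a b =
      (N.map (show (⟨a⟩ : MonomialCat σ) ⟶ ⟨b⟩ from ⟨u, h⟩)).hom := dif_pos h

/-- The linear map out of a free module determined by the images of the basis elements. -/
noncomputable def freeDescLinear {deg : ι → ℕ} (y : ∀ s, N.obj ⟨deg s⟩) (b : ℕ) :
    (ι →₀ MvPolynomial σ K) →ₗ[K] N.obj ⟨b⟩ :=
  Finsupp.lsum K fun s => (basisMonomials σ K).constr K fun u => monomialAct N u (deg s) b (y s)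

lemma freeDescLinear_single {deg : ι → ℕ} (y : ∀ s, N.obj ⟨deg s⟩) (b : ℕ) (s : ι) (u : σ →₀ ℕ) :
    freeDescLinear N y b (Finsupp.single s (monomial u 1)) = monomialAct N u (deg s) b (y s) := by
  have h : monomial u (1 : K) = basisMonomials σ K u := rfl
  simp only [freeDescLinear, Finsupp.lsum_single, h, Module.Basis.constr_basis]

/-- The natural transformation out of a free module determined by the images of the basis
elements. -/
noncomputable def freeDesc {deg : ι → ℕ} (y : ∀ s, N.obj ⟨deg s⟩) :
    (freeGrading σ K deg).functor ⟶ N where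
  app b := ModuleCat.ofHom ((freeDescLinear N y b.deg).domRestrict _)
  naturality a b v := by
    refine ModuleCat.hom_ext (freeGrading_linearMap_ext fun s u hu => ?_)
    have h1 : deg s + (u + v.1).degree = b.deg := by rw [map_add, ← add_assoc, hu, v.2]
    have h2 : freeDescLinear N y b.deg
        (monomial v.1 (1 : K) • Finsupp.single s (monomial u (1 : K))) =
        (N.map v).hom (freeDescLinear N y a.deg (Finsupp.single s (monomial u (1 : K)))) := by
      rw [Finsupp.smul_single, smul_eq_mul, monomial_mul, one_mul, add_comm v.1,
        freeDescLinear_single, freeDescLinear_single, monomialAct_of_eq N hu,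
        monomialAct_of_eq N h1]
      change _ = (N.map _ ≫ N.map v).hom (y s)
      rw [← N.map_comp]
      rfl
    exact h2

lemma freeDesc_app_basis {deg : ι → ℕ} (y : ∀ s, N.obj ⟨deg s⟩) (s : ι) :
    ((freeDesc N y).app ⟨deg s⟩).hom (freeGradingBasis deg s) = y s := by
  refine (freeDescLinear_single N y (deg s) s 0).trans ?_
  rw [monomialAct_of_eq N (by simp)]
  exact congrArg (fun f => f.hom (y s)) (N.map_id ⟨deg s⟩)

variable {N} in
lemma freeGrading_functor_hom_ext {deg : ι → ℕ} {η θ : (freeGrading σ K deg).functor ⟶ N}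
    (h : ∀ s, (η.app ⟨deg s⟩).hom (freeGradingBasis deg s) =
      (θ.app ⟨deg s⟩).hom (freeGradingBasis deg s)) : η = θ := by
  ext1
  ext1 ⟨b⟩
  refine ModuleCat.hom_ext (freeGrading_linearMap_ext fun s u hu => ?_)
  let v : (⟨deg s⟩ : MonomialCat σ) ⟶ ⟨b⟩ := ⟨u, hu⟩
  have hv : ((freeGrading σ K deg).functor.map v).hom (freeGradingBasis deg s) =
      (⟨_, single_monomial_mem_freeGrading hu⟩ : (freeGrading σ K deg).piece b) := by
    refine Subtype.ext ?_
    change monomial u (1 : K) • Finsupp.single s (monomial 0 (1 : K)) = _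
    rw [Finsupp.smul_single, smul_eq_mul, monomial_mul, one_mul, add_zero]
  have key : ∀ ξ : (freeGrading σ K deg).functor ⟶ N,
      (ξ.app ⟨b⟩).hom (⟨_, single_monomial_mem_freeGrading hu⟩ : (freeGrading σ K deg).piece b) =
      (N.map v).hom ((ξ.app ⟨deg s⟩).hom (freeGradingBasis deg s)) := by
    intro ξ
    rw [← hv]
    exact congrArg (fun f => f.hom (freeGradingBasis deg s)) (ξ.naturality v)
  exact (key η).trans ((congrArg _ (h s)).trans (key θ).symm)

/-- Morphisms out of a free module are determined by the images of the basis elements. -/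
noncomputable def freeHomEquiv (deg : ι → ℕ) :
    ((freeGrading σ K deg).functor ⟶ N) ≃ₗ[K] (∀ s, N.obj ⟨deg s⟩) where
  toFun η s := (η.app ⟨deg s⟩).hom (freeGradingBasis deg s)
  map_add' _ _ := rfl
  map_smul' _ _ := rfl
  invFun y := freeDesc N y
  left_inv _ := freeGrading_functor_hom_ext fun s => freeDesc_app_basis N _ s
  right_inv y := funext fun s => freeDesc_app_basis N y s

instance (deg : ι → ℕ) : Projective (freeGrading σ K deg).functor where
  factors {E X} f e he := by
    have hs : ∀ s, ∃ y, (e.app ⟨deg s⟩).hom y = (f.app ⟨deg s⟩).hom (freeGradingBasis deg s) :=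
      fun s => (ModuleCat.epi_iff_surjective _).1 inferInstance _
    choose y hy using hs
    refine ⟨freeDesc E y, freeGrading_functor_hom_ext fun s => ?_⟩
    rw [← hy]
    exact congrArg (e.app ⟨deg s⟩).hom (freeDesc_app_basis E y s)

/-- A morphism from a free module to a module annihilated by the variables kills the elements
whose coordinates have no constant term. -/
lemma freeGrading_app_eq_zero {deg : ι → ℕ} (hN : ∀ (a b : MonomialCat σ) (u : a ⟶ b), u.1 ≠ 0 →
    N.map u = 0) (η : (freeGrading σ K deg).functor ⟶ N) (b : MonomialCat σ)
    (x : (freeGrading σ K deg).piece b.deg) (hx : ∀ s, coeff 0 (x.1 s) = 0) :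
    (η.app b).hom x = 0 := by
  classical
  obtain ⟨y, rfl⟩ := (freeHomEquiv N deg).symm.surjective η
  change freeDescLinear N y b.deg x.1 = 0
  rw [freeDescLinear, Finsupp.lsum_apply]
  refine Finset.sum_eq_zero fun s _ => ?_
  have hL : ((basisMonomials σ K).constr K fun u => monomialAct N u (deg s) b.deg (y s)) =
      (LinearMap.toSpanSingleton K _ (monomialAct N 0 (deg s) b.deg (y s))).comp
        (lcoeff K (0 : σ →₀ ℕ)) := by
    refine (basisMonomials σ K).ext fun u => ?_
    rw [Module.Basis.constr_basis]
    by_cases hu : u = 0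
    · simp [hu]
    · have h0 : monomialAct N u (deg s) b.deg = 0 := by
        rw [monomialAct]
        split_ifs with h
        · rw [hN _ _ _ hu]
          rfl
        · rfl
      simp [h0, coeff_monomial, hu]
  refine (LinearMap.congr_fun hL (x.1 s)).trans ?_
  simp [hx s]

end FreeGrading

section ResidueField

variable {σ K : Type} [Field K]

lemma isUpperSet_ne_zero (σ : Type) : IsUpperSet {u : σ →₀ ℕ | u ≠ 0} := fun _ _ huv hu hv =>
  hu (le_antisymm (hv ▸ huv) zero_le)

variable (σ K) in
/-- The functor of the residue field `K(-j)`. -/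
noncomputable abbrev residueField (j : ℕ) : MonomialCat σ ⥤ ModuleCat.{0} K :=
  monomialQuotient K (isUpperSet_ne_zero σ) j

lemma residueField_map_eq_zero (j : ℕ) (a b : MonomialCat σ) (u : a ⟶ b) (hu : u.1 ≠ 0) :
    (residueField σ K j).map u = 0 := by
  refine ModuleCat.hom_ext (LinearMap.ext ?_)
  rintro ⟨_, p, -, rfl⟩
  refine Subtype.ext (Ideal.Quotient.eq_zero_iff_mem.2
    (mem_restrictSupportIdeal.2 fun v hv => ?_) :
      Ideal.Quotient.mk _ (monomial u.1 (1 : K) * p) = 0)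
  rintro rfl
  rw [coeff_monomial_mul', if_neg fun h => hu (le_antisymm h zero_le)] at hv
  exact hv rfl

lemma subsingleton_residueField_obj {j b : ℕ} (h : b ≠ j) :
    Subsingleton ((residueField σ K j).obj ⟨b⟩) := by
  refine subsingleton_of_forall_eq 0 ?_
  rintro ⟨_, p, hp, rfl⟩
  refine Subtype.ext (Ideal.Quotient.eq_zero_iff_mem.2 (mem_restrictSupportIdeal.2 fun v hv => ?_))
  rintro rfl
  have := mem_shiftedPiece.1 hp _ hv
  simp at this
  exact h this.symm

variable (σ K) in
lemma finrank_residueField_obj (j : ℕ) :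
    Module.finrank K ((residueField σ K j).obj ⟨j⟩) = 1 := by
  refine finrank_eq_one_iff'.2 ⟨⟨Ideal.Quotient.mk _ 1, 1, mem_shiftedPiece.2 ?_, rfl⟩, ?_, ?_⟩
  · classical
    intro u hu
    rw [coeff_one] at hu
    obtain rfl : 0 = u := by
      by_contra h
      exact hu (if_neg h)
    simp
  · intro h
    have h0 := Ideal.Quotient.eq_zero_iff_mem.1 (congrArg Subtype.val h)
    exact mem_restrictSupportIdeal.1 h0 0 (by simp) rfl
  · rintro ⟨_, p, hp, rfl⟩
    refine ⟨coeff 0 p, Subtype.ext ?_⟩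
    change coeff 0 p • Ideal.Quotient.mk _ 1 = Ideal.Quotient.mk _ p
    have h1 : coeff 0 p • Ideal.Quotient.mk (restrictSupportIdeal (R := K) _
        (isUpperSet_ne_zero σ)) 1 = Ideal.Quotient.mk _ (coeff 0 p • (1 : MvPolynomial σ K)) := rfl
    rw [h1, Ideal.Quotient.eq, mem_restrictSupportIdeal]
    rintro _ hu rfl
    simp at hu

lemma finrank_freeGrading_hom {ι : Type} (deg : ι → ℕ) (j : ℕ) [Fintype {s // deg s = j}] :
    Module.finrank K ((freeGrading σ K deg).functor ⟶ residueField σ K j) =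
      Fintype.card {s // deg s = j} := by
  rw [(freeHomEquiv (residueField σ K j) deg).finrank_eq]
  let ρ : (∀ s, (residueField σ K j).obj ⟨deg s⟩) →ₗ[K]
      (∀ t : {s // deg s = j}, (residueField σ K j).obj ⟨deg t.1⟩) :=
    LinearMap.pi fun t => LinearMap.proj t.1
  have hρ : Function.Bijective ρ := by
    classical
    constructor
    · intro y z h
      funext s
      by_cases hs : deg s = j
      · exact congrFun h ⟨s, hs⟩
      · have := subsingleton_residueField_obj (σ := σ) (K := K) hs
        exact Subsingleton.elim _ _
    · intro z
      refine ⟨fun s => if h : deg s = j then z ⟨s, h⟩ else 0, ?_⟩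
      funext t
      exact dif_pos t.2
  rw [(LinearEquiv.ofBijective ρ hρ).finrank_eq]
  have h1 : ∀ t : {s // deg s = j},
      Module.finrank K ((residueField σ K j).obj ⟨deg t.1⟩) = 1 := by
    intro t
    rw [t.2]
    exact finrank_residueField_obj σ K j
  have h2 : ∀ t : {s // deg s = j},
      Module.Finite K ((residueField σ K j).obj ⟨deg t.1⟩) := fun t =>
    Module.finite_of_finrank_eq_succ (h1 t)
  rw [Module.finrank_pi_fintype]
  simp [h1]

lemma subsingleton_freeGrading_hom {ι : Type} {deg : ι → ℕ} {j : ℕ} (h : ∀ s, deg s ≠ j) :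
    Subsingleton ((freeGrading σ K deg).functor ⟶ residueField σ K j) := by
  have := fun s => subsingleton_residueField_obj (σ := σ) (K := K) (h s)
  exact (freeHomEquiv (residueField σ K j) deg).toEquiv.subsingleton

end ResidueField

section ExtSupport

open Abelian

variable {σ K : Type} [Field K]

variable (K) in
lemma nonempty_iso_monomialQuotient_empty (a : ℕ) :
    Nonempty ((freeGrading σ K fun _ : Unit => a).functor ≅
      monomialQuotient K (isUpperSet_empty : IsUpperSet (∅ : Set (σ →₀ ℕ))) a) := by
  classical
  let J := restrictSupportIdeal (R := K) (∅ : Set (σ →₀ ℕ)) isUpperSet_empty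
  let π : (Unit →₀ MvPolynomial σ K) →ₗ[MvPolynomial σ K] (MvPolynomial σ K ⧸ J) :=
    (Submodule.mkQ J).comp (Finsupp.lapply ())
  have hπ : ∀ b x, x ∈ (freeGrading σ K fun _ : Unit => a).piece b →
      π x ∈ (quotientGrading J a).piece b := fun b x hx => ⟨x (), mem_freeGrading.1 hx (), rfl⟩
  let η := MonomialGrading.map _ _ π hπ
  have h : ∀ b, IsIso (η.app b) := by
    intro b
    refine (ConcreteCategory.isIso_iff_bijective _).2 ⟨?_, ?_⟩
    · refine (injective_iff_map_eq_zero (η.app b).hom).2 fun x hx => ?_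
      have h0 := Ideal.Quotient.eq_zero_iff_mem.1 (congrArg Subtype.val hx :
        Ideal.Quotient.mk J (x.1 ()) = 0)
      refine Subtype.ext (Finsupp.ext fun _ => MvPolynomial.ext _ _ fun u => ?_)
      by_contra hu
      exact mem_restrictSupportIdeal.1 h0 u hu
    · rintro ⟨_, p, hp, rfl⟩
      refine ⟨⟨Finsupp.single () p, mem_freeGrading.2 fun _ => by simpa using hp⟩, Subtype.ext ?_⟩
      change Ideal.Quotient.mk J (Finsupp.single () p ()) = Ideal.Quotient.mk J p
      rw [Finsupp.single_eq_same]
  have : IsIso η := (NatTrans.isIso_iff_isIso_app _).2 h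
  exact ⟨asIso η⟩

/-- The bigraded Betti numbers of the quotient by the monomial ideal with exponents in `U` are
supported in `S`. -/
def ExtSupport (K : Type) [Field K] {U : Set (σ →₀ ℕ)} (hU : IsUpperSet U) (S : ℕ → ℕ → Prop) :
    Prop :=
  ∀ a i j, (∀ t, j = a + t → ¬ S i t) →
    Subsingleton (Ext (monomialQuotient K hU a) (residueField σ K j) i)

/-- The bigraded Betti number in position `(i, t)` of the quotient by the monomial ideal with
exponents in `U` is one. -/
def ExtRankOne (K : Type) [Field K] {U : Set (σ →₀ ℕ)} (hU : IsUpperSet U) (i t : ℕ) : Prop :=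
  ∀ a, Module.finrank K (Ext (monomialQuotient K hU a) (residueField σ K (a + t)) i) = 1

lemma projective_monomialQuotient_empty (a : ℕ) :
    Projective (monomialQuotient K (isUpperSet_empty : IsUpperSet (∅ : Set (σ →₀ ℕ))) a) :=
  Projective.of_iso (nonempty_iso_monomialQuotient_empty K a).some inferInstance

lemma extSupport_empty :
    ExtSupport K (isUpperSet_empty : IsUpperSet (∅ : Set (σ →₀ ℕ))) fun i t => i = 0 ∧ t = 0 := by
  intro a i j h
  have := projective_monomialQuotient_empty (σ := σ) (K := K) a
  cases i with
  | succ i => exact Ext.subsingleton_of_projective _ _ _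
  | zero =>
    obtain ⟨e⟩ := nonempty_iso_monomialQuotient_empty (σ := σ) K a
    have := subsingleton_freeGrading_hom (σ := σ) (K := K) (deg := fun _ : Unit => a) (j := j)
      fun _ hj => h 0 (by omega) ⟨rfl, rfl⟩
    exact (Ext.linearEquiv₀.trans (Linear.homCongr K e (Iso.refl _)).symm).toEquiv.subsingleton

lemma extRankOne_empty :
    ExtRankOne K (isUpperSet_empty : IsUpperSet (∅ : Set (σ →₀ ℕ))) 0 0 := by
  intro a
  obtain ⟨e⟩ := nonempty_iso_monomialQuotient_empty (σ := σ) K a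
  rw [(Ext.linearEquiv₀.trans (Linear.homCongr K e (Iso.refl _)).symm).finrank_eq]
  have : Fintype {s : Unit // (fun _ : Unit => a) s = a + 0} := Fintype.ofFinite _
  rw [finrank_freeGrading_hom]
  refine Fintype.card_eq_one_iff.2 ⟨⟨(), rfl⟩, fun _ => rfl⟩

variable {U U' U'' : Set (σ →₀ ℕ)} {hU : IsUpperSet U} {hU' : IsUpperSet U'}
  (hU'' : IsUpperSet U'') (m : σ →₀ ℕ)

lemma ExtSupport.of_colon {S S' T : ℕ → ℕ → Prop} (hS : ExtSupport K hU S)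
    (hS' : ExtSupport K hU' S') (h' : ∀ u, m + u ∈ U ↔ u ∈ U')
    (h'' : ∀ u, u ∈ U'' ↔ u ∈ U ∨ m ≤ u) (hT : ∀ i t, S i t → T i t)
    (hT' : ∀ i t, S' i t → T (i + 1) (t + m.degree)) : ExtSupport K hU'' T := by
  intro a i j h
  obtain ⟨f, g, w, hfg⟩ := exists_shortExact_monomialQuotient (K := K) hU hU' hU'' m h' h'' a
  refine hfg.subsingleton_ext_X₃ _ i (hS a i j fun t ht h1 => h t ht (hT i t h1)) ?_
  rintro k rfl
  exact hS' _ k j fun t ht h1 => h (t + m.degree) (by omega) (hT' k t h1)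

lemma ExtRankOne.of_colon {S : ℕ → ℕ → Prop} {i t t' : ℕ} (hS : ExtSupport K hU S)
    (h1 : ExtRankOne K hU' i t) (h' : ∀ u, m + u ∈ U ↔ u ∈ U')
    (h'' : ∀ u, u ∈ U'' ↔ u ∈ U ∨ m ≤ u) (ht : t' = t + m.degree) (hi : ¬ S i t')
    (hi' : ¬ S (i + 1) t') : ExtRankOne K hU'' (i + 1) t' := by
  intro a
  obtain ⟨f, g, w, hfg⟩ := exists_shortExact_monomialQuotient (K := K) hU hU' hU'' m h' h'' a
  have hz : Subsingleton (Ext (monomialQuotient K hU a) (residueField σ K (a + t')) i) :=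
    hS a i _ fun s hs h2 => hi (by obtain rfl : t' = s := by omega
                                   exact h2)
  obtain ⟨e⟩ := hfg.nonempty_ext_linearEquiv K (residueField σ K (a + t')) i
    (fun x => by
      have hx : x = 0 := hz.elim _ _
      rw [hx, Ext.comp_zero])
    (hS a (i + 1) _ fun s hs h2 => hi' (by obtain rfl : t' = s := by omega
                                           exact h2))
  have h2 := h1 (a + m.degree)
  rw [show a + m.degree + t = a + t' by omega] at h2
  rw [← e.finrank_eq]
  exact h2

end ExtSupport

section Paths

variable {σ K : Type} [Field K]

lemma ExtSupport.congr {U U' : Set (σ →₀ ℕ)} {hU : IsUpperSet U} {S T : ℕ → ℕ → Prop}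
    (hS : ExtSupport K hU S) (hU' : IsUpperSet U') (h : ∀ u, u ∈ U' ↔ u ∈ U)
    (hT : ∀ i t, S i t → T i t) : ExtSupport K hU' T := by
  obtain rfl : U' = U := Set.ext h
  exact fun a i j hj => hS a i j fun t ht h1 => hj t ht (hT i t h1)

lemma ExtRankOne.congr {U U' : Set (σ →₀ ℕ)} {hU : IsUpperSet U} {i t : ℕ}
    (h1 : ExtRankOne K hU i t) (hU' : IsUpperSet U') (h : ∀ u, u ∈ U' ↔ u ∈ U) :
    ExtRankOne K hU' i t := by
  obtain rfl : U' = U := Set.ext h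
  exact h1

/-- Exponents of monomials in an ideal enlarged by a variable. -/
def addVar (U : Set (σ →₀ ℕ)) (x : σ) : Set (σ →₀ ℕ) := {u | u ∈ U ∨ u x ≠ 0}

lemma IsUpperSet.addVar {U : Set (σ →₀ ℕ)} (hU : IsUpperSet U) (x : σ) :
    IsUpperSet (addVar U x) := fun _ _ huv hu =>
  hu.imp (hU huv) fun hx => (lt_of_lt_of_le (Nat.pos_of_ne_zero hx) (huv x)).ne'

lemma mem_addVar_iff {U : Set (σ →₀ ℕ)} {x : σ} (u : σ →₀ ℕ) :
    u ∈ addVar U x ↔ u ∈ U ∨ Finsupp.single x 1 ≤ u := by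
  rw [Finsupp.single_le_iff, Nat.one_le_iff_ne_zero]
  exact Iff.rfl

lemma ExtSupport.addVar {U : Set (σ →₀ ℕ)} {hU : IsUpperSet U} {S T : ℕ → ℕ → Prop} {x : σ}
    (hS : ExtSupport K hU S) (hx : ∀ u, Finsupp.single x 1 + u ∈ U ↔ u ∈ U)
    (hT : ∀ i t, S i t → T i t ∧ T (i + 1) (t + 1)) : ExtSupport K (hU.addVar x) T :=
  hS.of_colon _ (Finsupp.single x 1) hS hx mem_addVar_iff (fun i t h => (hT i t h).1)
    fun i t h => by
      rw [Finsupp.degree_single]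
      exact (hT i t h).2

lemma ExtRankOne.addVar {U : Set (σ →₀ ℕ)} {hU : IsUpperSet U} {S : ℕ → ℕ → Prop} {x : σ}
    {i t : ℕ} (h1 : ExtRankOne K hU i t) (hS : ExtSupport K hU S)
    (hx : ∀ u, Finsupp.single x 1 + u ∈ U ↔ u ∈ U) (hi : ¬ S i (t + 1))
    (hi' : ¬ S (i + 1) (t + 1)) : ExtRankOne K (hU.addVar x) (i + 1) (t + 1) :=
  ExtRankOne.of_colon _ (Finsupp.single x 1) hS h1 hx mem_addVar_iff (by simp) hi hi'

lemma single_add_single_le_iff {x y : σ} (h : x ≠ y) (u : σ →₀ ℕ) :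
    Finsupp.single x 1 + Finsupp.single y 1 ≤ u ↔ u x ≠ 0 ∧ u y ≠ 0 := by
  classical
  constructor
  · intro hu
    have h1 := hu x
    have h2 := hu y
    simp [h, h.symm] at h1 h2
    omega
  · rintro ⟨h1, h2⟩ z
    simp only [Finsupp.add_apply, Finsupp.single_apply]
    split_ifs with hx hy hy
    · exact absurd (hx.trans hy.symm) h
    · subst hx
      omega
    · subst hy
      omega
    · omega

/-- Exponents of monomials in the edge ideal of the path with vertices `v 0, …, v (M - 1)`. -/
def pathSet (v : ℕ → σ) (M : ℕ) : Set (σ →₀ ℕ) :=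
  {u | ∃ i, i + 1 < M ∧ u (v i) ≠ 0 ∧ u (v (i + 1)) ≠ 0}

lemma isUpperSet_pathSet (v : ℕ → σ) (M : ℕ) : IsUpperSet (pathSet v M) := by
  rintro u w huw ⟨i, hi, h1, h2⟩
  have h3 := huw (v i)
  have h4 := huw (v (i + 1))
  exact ⟨i, hi, by omega, by omega⟩

lemma single_add_mem_pathSet {v : ℕ → σ} {M : ℕ} {x : σ} (hx : ∀ i < M, v i ≠ x) (u : σ →₀ ℕ) :
    Finsupp.single x 1 + u ∈ pathSet v M ↔ u ∈ pathSet v M := by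
  have h : ∀ i < M, (Finsupp.single x 1 + u : σ →₀ ℕ) (v i) = u (v i) := fun i hi => by
    rw [Finsupp.add_apply, Finsupp.single_eq_of_ne (hx i hi), zero_add]
  refine exists_congr fun i => and_congr_right fun hi => ?_
  rw [h i (by omega), h (i + 1) hi]

lemma mem_pathSet_succ {v : ℕ → σ} {M : ℕ} (hv : Set.InjOn v (Set.Iio (M + 2))) (u : σ →₀ ℕ) :
    u ∈ pathSet v (M + 2) ↔ u ∈ pathSet v (M + 1) ∨
      Finsupp.single (v M) 1 + Finsupp.single (v (M + 1)) 1 ≤ u := by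
  rw [single_add_single_le_iff fun h => by
    have := hv (Set.mem_Iio.2 (by omega)) (Set.mem_Iio.2 (by omega)) h
    omega]
  constructor
  · rintro ⟨i, hi, h1, h2⟩
    rcases (show i + 1 < M + 1 ∨ i = M by omega) with h | rfl
    · exact Or.inl ⟨i, h, h1, h2⟩
    · exact Or.inr ⟨h1, h2⟩
  · rintro (⟨i, hi, h1, h2⟩ | ⟨h1, h2⟩)
    · exact ⟨i, by omega, h1, h2⟩
    · exact ⟨M, by omega, h1, h2⟩

lemma add_mem_pathSet_iff {v : ℕ → σ} {M : ℕ} (hv : Set.InjOn v (Set.Iio (M + 3)))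
    (u : σ →₀ ℕ) :
    Finsupp.single (v (M + 1)) 1 + Finsupp.single (v (M + 2)) 1 + u ∈ pathSet v (M + 2) ↔
      u ∈ addVar (pathSet v M) (v M) := by
  classical
  have hi : ∀ i j, i < M + 3 → j < M + 3 → (v i = v j ↔ i = j) := fun i j h1 h2 =>
    ⟨fun h => hv (Set.mem_Iio.2 h1) (Set.mem_Iio.2 h2) h, fun h => h ▸ rfl⟩
  have h0 : ∀ i ≤ M,
      (Finsupp.single (v (M + 1)) 1 + Finsupp.single (v (M + 2)) 1 + u : σ →₀ ℕ) (v i) =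
      u (v i) := by
    intro i h
    rw [Finsupp.add_apply, Finsupp.add_apply, Finsupp.single_apply, Finsupp.single_apply,
      hi _ _ (by omega) (by omega), hi _ _ (by omega) (by omega), if_neg (by omega),
      if_neg (by omega), zero_add, zero_add]
  constructor
  · rintro ⟨i, h, h1, h2⟩
    rcases (show i + 1 < M ∨ i + 1 = M ∨ i = M by omega) with h3 | h3 | h3
    · rw [h0 i (by omega)] at h1
      rw [h0 (i + 1) (by omega)] at h2
      exact Or.inl ⟨i, h3, h1, h2⟩
    · rw [h0 (i + 1) (by omega), h3] at h2
      exact Or.inr h2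
    · rw [h0 i (by omega), h3] at h1
      exact Or.inr h1
  · rintro (⟨i, h, h1, h2⟩ | h)
    · rw [← h0 i (by omega)] at h1
      rw [← h0 (i + 1) (by omega)] at h2
      exact ⟨i, by omega, h1, h2⟩
    · exact ⟨M, by omega, by rwa [h0 M le_rfl], by simp⟩

/-- Bounds for the positions of the nonzero Betti numbers of a path. -/
def PathBound (M i t : ℕ) : Prop := 3 * i ≤ 2 * t ∧ t ≤ 2 * i ∧ 3 * t ≤ M + 1 + 3 * i ∧ t ≤ M

variable (K) in
lemma extSupport_pathSet {v : ℕ → σ} : ∀ {M : ℕ}, Set.InjOn v (Set.Iio M) →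
    ExtSupport K (isUpperSet_pathSet v M) (PathBound M) := by
  have h0 : ∀ M < 2, ExtSupport K (isUpperSet_pathSet v M) (PathBound M) := fun M hM =>
    extSupport_empty.congr _ (fun u => ⟨fun ⟨i, hi, _⟩ => absurd hi (by omega), fun h => h.elim⟩)
      fun i t h => by simp only [PathBound]; omega
  intro M
  induction M using Nat.strong_induction_on with
  | _ M ih =>
    intro hv
    match M, hv with
    | 0, _ => exact h0 0 (by omega)
    | 1, _ => exact h0 1 (by omega)
    | 2, hv =>
      refine (h0 1 (by omega)).of_colon _ _ extSupport_empty (fun u => ?_) (mem_pathSet_succ hv)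
        (fun i t h => ?_) fun i t h => ?_
      · exact ⟨fun ⟨i, hi, _⟩ => absurd hi (by omega), fun h => h.elim⟩
      · simp only [PathBound] at *
        omega
      · rw [map_add, Finsupp.degree_single, Finsupp.degree_single]
        simp only [PathBound]
        omega
    | M + 3, hv =>
      have hx : ∀ i < M, v i ≠ v M := fun i hi h => by
        have := hv (Set.mem_Iio.2 (by omega)) (Set.mem_Iio.2 (by omega)) h
        omega
      have h1 := ih (M + 2) (by omega) (hv.mono fun i hi => Set.mem_Iio.2 (by
        have := Set.mem_Iio.1 hi
        omega))
      have h2 := ih M (by omega) (hv.mono fun i hi => Set.mem_Iio.2 (by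
        have := Set.mem_Iio.1 hi
        omega))
      have h3 := h2.addVar (T := fun i t => PathBound M i t ∨ ∃ i' t', PathBound M i' t' ∧
        i = i' + 1 ∧ t = t' + 1) (single_add_mem_pathSet hx)
        fun i t h => ⟨Or.inl h, Or.inr ⟨i, t, h, rfl, rfl⟩⟩
      refine h1.of_colon _ _ h3 (add_mem_pathSet_iff hv) (mem_pathSet_succ hv)
        (fun i t h => ?_) fun i t h => ?_
      · simp only [PathBound] at *
        omega
      · rw [map_add, Finsupp.degree_single, Finsupp.degree_single]
        simp only [PathBound] at *
        obtain h | ⟨i', t', h, rfl, rfl⟩ := h <;> omega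

lemma extRankOne_pathSet {v : ℕ → σ} : ∀ {k : ℕ}, Set.InjOn v (Set.Iio (3 * k)) →
    ExtRankOne K (isUpperSet_pathSet v (3 * k)) (2 * k) (3 * k) := by
  intro k
  induction k with
  | zero =>
    exact fun _ => extRankOne_empty.congr _ fun u =>
      ⟨fun ⟨i, hi, _⟩ => absurd hi (by omega), fun h => h.elim⟩
  | succ k ih =>
    intro hv
    have hmono : ∀ M ≤ 3 * (k + 1), Set.InjOn v (Set.Iio M) := fun M hM =>
      hv.mono (Set.Iio_subset_Iio hM)
    have hx : ∀ i < 3 * k, v i ≠ v (3 * k) := fun i hi h => by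
      have := hv (Set.mem_Iio.2 (by omega)) (Set.mem_Iio.2 (by omega)) h
      omega
    have h1 := (ih (hmono _ (by omega))).addVar (extSupport_pathSet K (hmono _ (by omega)))
      (single_add_mem_pathSet hx) (by simp only [PathBound]; omega)
      (by simp only [PathBound]; omega)
    exact ExtRankOne.of_colon (isUpperSet_pathSet v (3 * k + 3)) _
      (extSupport_pathSet K (hmono (3 * k + 2) (by omega))) h1 (add_mem_pathSet_iff hv)
      (mem_pathSet_succ hv) (by simp; omega) (by simp only [PathBound]; omega)
      (by simp only [PathBound]; omega)

end Paths

section Cycles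

variable {K : Type} [Field K]

lemma add_mem_pathSet_iff_of_ends {σ : Type} {v : ℕ → σ} {M : ℕ}
    (hv : Set.InjOn v (Set.Iio (M + 4))) (u : σ →₀ ℕ) :
    Finsupp.single (v 0) 1 + Finsupp.single (v (M + 3)) 1 + u ∈ pathSet v (M + 4) ↔
      u ∈ addVar (addVar (pathSet (fun i => v (i + 2)) M) (v 1)) (v (M + 2)) := by
  classical
  have hi : ∀ i j, i < M + 4 → j < M + 4 → (v i = v j ↔ i = j) := fun i j h1 h2 =>
    ⟨fun h => hv (Set.mem_Iio.2 h1) (Set.mem_Iio.2 h2) h, fun h => h ▸ rfl⟩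
  have h0 : ∀ i, 0 < i → i < M + 3 →
      (Finsupp.single (v 0) 1 + Finsupp.single (v (M + 3)) 1 + u : σ →₀ ℕ) (v i) = u (v i) := by
    intro i h1 h2
    rw [Finsupp.add_apply, Finsupp.add_apply, Finsupp.single_apply, Finsupp.single_apply,
      hi _ _ (by omega) (by omega), hi _ _ (by omega) (by omega), if_neg (by omega),
      if_neg (by omega), zero_add, zero_add]
  constructor
  · rintro ⟨i, h, h1, h2⟩
    rcases (show i = 0 ∨ i = 1 ∨ i = M + 1 ∨ i = M + 2 ∨ 2 ≤ i ∧ i < M + 1 by omega) with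
      rfl | rfl | rfl | rfl | h3
    · rw [h0 (0 + 1) (by omega) (by omega)] at h2
      exact Or.inl (Or.inr h2)
    · rw [h0 1 (by omega) (by omega)] at h1
      exact Or.inl (Or.inr h1)
    · rw [h0 (M + 1 + 1) (by omega) (by omega)] at h2
      exact Or.inr h2
    · rw [h0 (M + 2) (by omega) (by omega)] at h1
      exact Or.inr h1
    · obtain ⟨j, rfl⟩ := Nat.exists_eq_add_of_le' h3.1
      rw [h0 _ (by omega) (by omega)] at h1 h2
      exact Or.inl (Or.inl ⟨j, by omega, h1, h2⟩)
  · rintro ((⟨i, h, h1, h2⟩ | h) | h)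
    · refine ⟨i + 2, by omega, ?_, ?_⟩
      · rwa [h0 _ (by omega) (by omega)]
      · rw [h0 _ (by omega) (by omega)]
        exact h2
    · exact ⟨0, by omega, by simp, by rwa [h0 _ (by omega) (by omega)]⟩
    · exact ⟨M + 2, by omega, by rwa [h0 _ (by omega) (by omega)], by simp⟩

variable (n : ℕ)

/-- Exponents of monomials in the edge ideal of a cycle. -/
def cycleSet : Set (ZMod n →₀ ℕ) := {u | ∃ i, u i ≠ 0 ∧ u (i + 1) ≠ 0}

lemma isUpperSet_cycleSet : IsUpperSet (cycleSet n) := by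
  rintro u w huw ⟨i, h1, h2⟩
  have h3 := huw i
  have h4 := huw (i + 1)
  exact ⟨i, by omega, by omega⟩

variable (K) in
lemma cycleIdeal_eq_restrictSupportIdeal (hn : 2 ≤ n) :
    cycleIdeal K n = restrictSupportIdeal (R := K) (cycleSet n) (isUpperSet_cycleSet n) := by
  have h1 : cycleIdeal K n = Ideal.span ((fun s : ZMod n →₀ ℕ => monomial s (1 : K)) ''
      Set.range fun i : ZMod n => Finsupp.single i 1 + Finsupp.single (i + 1) 1) := by
    rw [cycleIdeal, ← Set.range_comp]
    congr 2
    funext i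
    simp [X, monomial_mul]
  have h2 : ∀ i : ZMod n, i ≠ i + 1 := by
    have : Fact (1 < n) := ⟨hn⟩
    intro i h
    exact one_ne_zero (left_eq_add.1 h)
  ext p
  rw [h1, mem_ideal_span_monomial_image, mem_restrictSupportIdeal]
  simp only [mem_support_iff, Set.mem_range, exists_exists_eq_and]
  simp only [single_add_single_le_iff (h2 _)]
  rfl

variable {n}

lemma injOn_natCast_zmod : Set.InjOn (fun i : ℕ => (i : ZMod n)) (Set.Iio n) := fun i hi j hj h =>
  Nat.ModEq.eq_of_lt_of_lt ((ZMod.natCast_eq_natCast_iff i j n).1 h) hi hj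

lemma mem_cycleSet {k : ℕ} (u : ZMod (k + 4) →₀ ℕ) :
    u ∈ cycleSet (k + 4) ↔ u ∈ pathSet (fun i : ℕ => (i : ZMod (k + 4))) (k + 4) ∨
      Finsupp.single ((0 : ℕ) : ZMod (k + 4)) 1 +
        Finsupp.single ((k + 3 : ℕ) : ZMod (k + 4)) 1 ≤ u := by
  have h4 : ((k + 3 : ℕ) : ZMod (k + 4)) + 1 = ((0 : ℕ) : ZMod (k + 4)) := by
    have := ZMod.natCast_self (k + 4)
    rw [Nat.cast_zero, ← this]
    push_cast
    ring
  rw [single_add_single_le_iff fun h => by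
    have := injOn_natCast_zmod (n := k + 4) (Set.mem_Iio.2 (by omega)) (Set.mem_Iio.2 (by omega)) h
    omega]
  constructor
  · rintro ⟨i, h1, h2⟩
    obtain ⟨j, hj, rfl⟩ : ∃ j < k + 4, ((j : ℕ) : ZMod (k + 4)) = i :=
      ⟨i.val, ZMod.val_lt i, ZMod.natCast_zmod_val i⟩
    rcases (show j + 1 < k + 4 ∨ j = k + 3 by omega) with h | rfl
    · exact Or.inl ⟨j, h, h1, by simpa using h2⟩
    · rw [h4] at h2
      exact Or.inr ⟨h2, h1⟩
  · rintro (⟨i, hi, h1, h2⟩ | ⟨h1, h2⟩)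
    · exact ⟨i, h1, by simpa using h2⟩
    · exact ⟨_, h2, by rwa [h4]⟩

variable (K)

lemma ext_cycleSet (k : ℕ) :
    ExtSupport K (isUpperSet_cycleSet (3 * k + 4)) (fun i _ => i ≤ 2 * k + 3) ∧
      ExtRankOne K (isUpperSet_cycleSet (3 * k + 4)) (2 * k + 3) (3 * k + 4) := by
  let v : ℕ → ZMod (3 * k + 4) := fun i => (i : ZMod (3 * k + 4))
  have hv : Set.InjOn v (Set.Iio (3 * k + 4)) := injOn_natCast_zmod
  have hne : ∀ i j, i < 3 * k + 4 → j < 3 * k + 4 → i ≠ j → v i ≠ v j := fun i j h1 h2 h h3 =>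
    h (hv (Set.mem_Iio.2 h1) (Set.mem_Iio.2 h2) h3)
  have hw : Set.InjOn (fun i => v (i + 2)) (Set.Iio (3 * k)) := fun i hi j hj h => by
    have h1 := Set.mem_Iio.1 hi
    have h2 := Set.mem_Iio.1 hj
    by_contra h3
    exact hne _ _ (by omega) (by omega) (by omega) h
  have hx1 := single_add_mem_pathSet (v := fun i => v (i + 2)) (M := 3 * k) (x := v 1)
    fun i hi => hne _ _ (by omega) (by omega) (by omega)
  have hx2 : ∀ u, Finsupp.single (v (3 * k + 2)) 1 + u ∈
      addVar (pathSet (fun i => v (i + 2)) (3 * k)) (v 1) ↔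
        u ∈ addVar (pathSet (fun i => v (i + 2)) (3 * k)) (v 1) := by
    intro u
    refine or_congr (single_add_mem_pathSet
      (fun i hi => hne _ _ (by omega) (by omega) (by omega)) u) ?_
    rw [Finsupp.add_apply,
      Finsupp.single_eq_of_ne (hne _ _ (by omega) (by omega) (by omega)), zero_add]
  have s0 := extSupport_pathSet K hw
  have s1 := s0.addVar (T := fun i t => t ≤ 3 * k + 1 ∧ 3 * i ≤ 2 * t + 1) hx1
    (by simp only [PathBound]; omega)
  have s2 := s1.addVar (T := fun i t => i ≤ 2 * k + 2) hx2 (by omega)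
  have r1 := (extRankOne_pathSet hw).addVar s0 hx1 (by simp only [PathBound]; omega)
    (by simp only [PathBound]; omega)
  have r2 := r1.addVar s1 hx2 (by omega) (by omega)
  have sp := extSupport_pathSet K hv
  have hcolon := add_mem_pathSet_iff_of_ends hv
  constructor
  · exact sp.of_colon _ _ s2 hcolon mem_cycleSet (by simp only [PathBound]; omega) (by omega)
  · exact ExtRankOne.of_colon _ _ sp r2 hcolon mem_cycleSet (by simp)
      (by simp only [PathBound]; omega) (by simp only [PathBound]; omega)

end Cycles

section HomogeneousProjections

variable {σ K : Type} [Field K]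

variable (σ K) in
/-- The homogeneous component of degree `b` of a polynomial, where `1` has degree `a`. -/
noncomputable def shiftedComponent (a b : ℕ) : MvPolynomial σ K →ₗ[K] MvPolynomial σ K :=
  open Classical in if a ≤ b then homogeneousComponent (b - a) else 0

lemma coeff_shiftedComponent (a b : ℕ) (p : MvPolynomial σ K) (u : σ →₀ ℕ) :
    coeff u (shiftedComponent σ K a b p) = if a + u.degree = b then coeff u p else 0 := by
  rw [shiftedComponent]
  split_ifs with h1 h2 h2
  · rw [coeff_homogeneousComponent, if_pos (by omega)]
  · rw [coeff_homogeneousComponent, if_neg (by omega)]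
  · omega
  · simp

lemma shiftedComponent_mem (a b : ℕ) (p : MvPolynomial σ K) :
    shiftedComponent σ K a b p ∈ shiftedPiece σ K a b := by
  refine mem_shiftedPiece.2 fun u hu => ?_
  by_contra h
  rw [coeff_shiftedComponent, if_neg h] at hu
  exact hu rfl

lemma shiftedComponent_of_mem {a b : ℕ} {p : MvPolynomial σ K} (hp : p ∈ shiftedPiece σ K a b)
    (c : ℕ) : shiftedComponent σ K a c p = if b = c then p else 0 := by
  rw [mem_shiftedPiece] at hp
  ext u
  rw [coeff_shiftedComponent]
  by_cases hu : coeff u p = 0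
  · split_ifs <;> simp [hu]
  · rw [hp u hu]
    split_ifs <;> simp

/-- A family of projections onto the homogeneous pieces of a grading. -/
structure MonomialGrading.Projections {M : Type} [AddCommGroup M] [Module K M]
    [Module (MvPolynomial σ K) M] (G : MonomialGrading σ K M) where
  /-- the projection onto the piece of degree `b` -/
  proj (b : ℕ) : M →ₗ[K] M
  proj_of_mem : ∀ {b : ℕ} {x : M}, x ∈ G.piece b → ∀ c, proj c x = if b = c then x else 0

/-- The homogeneous components of elements of a free module. -/
noncomputable def freeProjections {ι : Type} (deg : ι → ℕ) :
    (freeGrading σ K deg).Projections where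
  proj b := Finsupp.lsum K fun s => Finsupp.lsingle s ∘ₗ shiftedComponent σ K (deg s) b
  proj_of_mem {b x} hx c := by
    rw [Finsupp.lsum_apply, Finsupp.sum]
    simp only [LinearMap.comp_apply, shiftedComponent_of_mem (mem_freeGrading.1 hx _) c]
    split_ifs
    · exact Finsupp.sum_single x
    · simp

lemma freeProjections_mem {ι : Type} (deg : ι → ℕ) (b : ℕ) (x : ι →₀ MvPolynomial σ K) :
    (freeProjections deg).proj b x ∈ (freeGrading σ K deg).piece b := by
  classical
  refine Submodule.sum_mem _ fun s _ => mem_freeGrading.2 fun t => ?_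
  change Finsupp.single s (shiftedComponent σ K (deg s) b (x s)) t ∈ _
  rw [Finsupp.single_apply]
  split_ifs with h
  · exact h ▸ shiftedComponent_mem _ _ _
  · exact zero_mem _

/-- The homogeneous component of degree `b` on a quotient by a monomial ideal. -/
noncomputable def quotientComponent {U : Set (σ →₀ ℕ)} (hU : IsUpperSet U) (a b : ℕ) :
    (MvPolynomial σ K ⧸ restrictSupportIdeal (R := K) U hU) →ₗ[K]
      (MvPolynomial σ K ⧸ restrictSupportIdeal (R := K) U hU) :=
  (Submodule.Quotient.restrictScalarsEquiv K (restrictSupportIdeal (R := K) U hU)).toLinearMap ∘ₗ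
    Submodule.mapQ ((restrictSupportIdeal (R := K) U hU).restrictScalars K)
      ((restrictSupportIdeal (R := K) U hU).restrictScalars K) (shiftedComponent σ K a b)
      (fun p hp => (mem_restrictSupportIdeal (hU := hU)).2 fun u hu => by
        rw [coeff_shiftedComponent] at hu
        refine (mem_restrictSupportIdeal (hU := hU)).1 hp u fun h => hu ?_
        rw [h, ite_self]) ∘ₗ
    (Submodule.Quotient.restrictScalarsEquiv K
      (restrictSupportIdeal (R := K) U hU)).symm.toLinearMap

lemma quotientComponent_mk {U : Set (σ →₀ ℕ)} (hU : IsUpperSet U) (a b : ℕ)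
    (p : MvPolynomial σ K) :
    quotientComponent hU a b (Ideal.Quotient.mk _ p) =
      Ideal.Quotient.mk _ (shiftedComponent σ K a b p) := rfl

/-- The homogeneous components of elements of a quotient by a monomial ideal. -/
noncomputable def quotientProjections {U : Set (σ →₀ ℕ)} (hU : IsUpperSet U) (a : ℕ) :
    (quotientGrading (restrictSupportIdeal (R := K) U hU) a).Projections where
  proj b := quotientComponent hU a b
  proj_of_mem {b x} hx c := by
    obtain ⟨p, hp, rfl⟩ := mem_quotientGrading.1 hx
    rw [quotientComponent_mk, shiftedComponent_of_mem hp c]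
    split_ifs
    · rfl
    · exact map_zero _

section Lift

variable {M : Type} [AddCommGroup M] [Module K M] [Module (MvPolynomial σ K) M]
  [IsScalarTower K (MvPolynomial σ K) M] {H : MonomialGrading σ K M} {ι : Type} {deg : ι → ℕ}
  {φ : (ι →₀ MvPolynomial σ K) →ₗ[MvPolynomial σ K] M}

lemma map_freeProjections (P : H.Projections)
    (hφ : ∀ b x, x ∈ (freeGrading σ K deg).piece b → φ x ∈ H.piece b) (b : ℕ)
    (x : ι →₀ MvPolynomial σ K) : φ ((freeProjections deg).proj b x) = P.proj b (φ x) := by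
  have h : φ.restrictScalars K ∘ₗ (freeProjections deg).proj b =
      P.proj b ∘ₗ φ.restrictScalars K := by
    refine Finsupp.lhom_ext' fun s => (basisMonomials σ K).ext fun u => ?_
    have hu := single_monomial_mem_freeGrading (σ := σ) (K := K) (deg := deg) (s := s) (u := u) rfl
    change φ ((freeProjections deg).proj b (Finsupp.single s (monomial u 1))) =
      P.proj b (φ (Finsupp.single s (monomial u 1)))
    rw [(freeProjections deg).proj_of_mem hu, P.proj_of_mem (hφ _ _ hu)]
    split_ifs
    · rfl
    · exact map_zero φ
  exact LinearMap.congr_fun h x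

lemma exists_mem_freeGrading_of_mem_range (P : H.Projections)
    (hφ : ∀ b x, x ∈ (freeGrading σ K deg).piece b → φ x ∈ H.piece b) {b : ℕ} {y : M}
    (hy : y ∈ H.piece b) (hy' : y ∈ LinearMap.range φ) :
    ∃ x ∈ (freeGrading σ K deg).piece b, φ x = y := by
  obtain ⟨x, rfl⟩ := hy'
  refine ⟨_, freeProjections_mem deg b x, ?_⟩
  rw [map_freeProjections P hφ, P.proj_of_mem hy, if_pos rfl]

end Lift

end HomogeneousProjections

section Syzygies

open Abelian

variable {σ K : Type} [Field K]

/-- The induced grading on a submodule, recorded on the ambient module. -/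
noncomputable def MonomialGrading.sub {M : Type} [AddCommGroup M] [Module K M]
    [Module (MvPolynomial σ K) M]
    [IsScalarTower K (MvPolynomial σ K) M] (G : MonomialGrading σ K M)
    (N : Submodule (MvPolynomial σ K) M) : MonomialGrading σ K M where
  piece b := G.piece b ⊓ N.restrictScalars K
  smul_mem u x hx h := ⟨G.smul_mem u x hx.1 h, N.smul_mem _ hx.2⟩

lemma exists_shortExact_sub {M F : Type} [AddCommGroup M] [Module K M]
    [Module (MvPolynomial σ K) M] [IsScalarTower K (MvPolynomial σ K) M] [AddCommGroup F]
    [Module K F] [Module (MvPolynomial σ K) F] [IsScalarTower K (MvPolynomial σ K) F]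
    (G : MonomialGrading σ K F) (H : MonomialGrading σ K M) (φ : F →ₗ[MvPolynomial σ K] M)
    (hφ : ∀ b x, x ∈ G.piece b → φ x ∈ H.piece b)
    (hsurj : ∀ b y, y ∈ H.piece b → ∃ x ∈ G.piece b, φ x = y)
    (N : Submodule (MvPolynomial σ K) F) (hN : LinearMap.ker φ = N) :
    ∃ w, (ShortComplex.mk ((G.sub N).map G LinearMap.id fun _ _ hx => hx.1)
      (G.map H φ hφ) w).ShortExact := by
  subst hN
  refine ⟨?_, shortExact_of_forall_app _ (fun b => ?_) (fun b x hx => ?_) (fun b y => ?_)⟩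
  · ext b x
    exact Subtype.ext x.2.2
  · exact fun x y h => Subtype.ext (congrArg (fun z : G.piece b.deg => z.1) h)
  · exact ⟨⟨x.1, x.2, congrArg Subtype.val hx⟩, rfl⟩
  · obtain ⟨x, hx, h⟩ := hsurj _ y.1 y.2
    exact ⟨⟨x, hx⟩, Subtype.ext h⟩

lemma CategoryTheory.ShortComplex.ShortExact.nonempty_ext_linearEquiv_of_comp_eq_zero {C : Type*}
    [Category* C] [Abelian C] [Linear K C] [HasExt C] {S : ShortComplex C} (hS : S.ShortExact)
    [Projective S.X₂] {Y : C} (h : ∀ η : S.X₂ ⟶ Y, S.f ≫ η = 0) :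
    Nonempty (Ext S.X₃ Y 0 ≃ₗ[K] (S.X₂ ⟶ Y)) ∧
      ∀ k, Nonempty (Ext S.X₃ Y (k + 1) ≃ₗ[K] Ext S.X₁ Y k) := by
  have := hS.epi_g
  constructor
  · refine ⟨Ext.linearEquiv₀.trans (LinearEquiv.ofBijective (Linear.leftComp K Y S.g) ⟨?_, ?_⟩)⟩
    · exact fun η θ hη => (cancel_epi S.g).1 hη
    · intro η
      obtain ⟨θ, hθ⟩ := Limits.CokernelCofork.IsColimit.desc' hS.gIsCokernel η (h η)
      exact ⟨θ, hθ⟩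
  · intro k
    have h₁ : ∀ x : Ext S.X₂ Y k, (Ext.mk₀ S.f).comp x (zero_add k) = 0 := by
      intro x
      cases k with
      | zero =>
        obtain ⟨η, rfl⟩ := Ext.homEquiv₀.symm.surjective x
        change (Ext.mk₀ S.f).comp (Ext.mk₀ η) _ = 0
        rw [Ext.mk₀_comp_mk₀, h, Ext.mk₀_zero]
      | succ k =>
        have := Ext.subsingleton_of_projective S.X₂ Y k
        rw [Subsingleton.elim x 0, Ext.comp_zero]
    obtain ⟨e⟩ := hS.nonempty_ext_linearEquiv K Y k h₁ (Ext.subsingleton_of_projective S.X₂ Y k)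
    exact ⟨e.symm⟩

end Syzygies

section GradedResolution

open Abelian

variable {K : Type} [Field K] {n : ℕ}

/-- The grading of the free module `⨁ⱼ R(-j)^(b j)`. -/
noncomputable abbrev sigmaGrading (K : Type) [Field K] (n : ℕ) (b : ℕ → ℕ) :
    MonomialGrading (ZMod n) K (GradedFreeMod K n b) :=
  freeGrading (ZMod n) K Sigma.fst

lemma isHomogElem_iff {b : ℕ → ℕ} {d : ℕ} {f : GradedFreeMod K n b} :
    IsHomogElem d f ↔ f ∈ (sigmaGrading K n b).piece d := by
  rw [mem_freeGrading]
  refine forall_congr' fun s => ?_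
  rw [mem_shiftedPiece]
  have hw : ∀ u : ZMod n →₀ ℕ, Finsupp.weight 1 u = u.degree := fun u =>
    (DFunLike.congr_fun Finsupp.degree_eq_weight_one u).symm
  constructor
  · rintro ⟨h1, h2⟩ u hu
    have h3 := h1 hu
    rw [hw] at h3
    have h4 := h2 fun h => hu (by rw [h, coeff_zero])
    omega
  · intro h
    refine ⟨fun u hu => ?_, fun h0 => ?_⟩
    · rw [hw]
      have := h u hu
      omega
    · obtain ⟨u, hu⟩ := MvPolynomial.exists_coeff_ne_zero h0
      have := h u hu
      omega

lemma irrelevantIdeal_le_ker_constantCoeff :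
    irrelevantIdeal K n ≤ RingHom.ker (constantCoeff : MvPolynomial (ZMod n) K →+* K) :=
  Ideal.span_le.2 (by
    rintro _ ⟨i, rfl⟩
    exact constantCoeff_X _ i)

lemma coeff_zero_of_mem_irrelevantIdeal_smul {ι : Type} {f : ι →₀ MvPolynomial (ZMod n) K}
    (hf : f ∈ irrelevantIdeal K n •
      (⊤ : Submodule (MvPolynomial (ZMod n) K) (ι →₀ MvPolynomial (ZMod n) K))) (s : ι) :
    coeff 0 (f s) = 0 := by
  induction hf using Submodule.smul_induction_on' with
  | smul r hr f _ =>
    have h1 : constantCoeff r = 0 := irrelevantIdeal_le_ker_constantCoeff hr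
    change constantCoeff (r * f s) = 0
    rw [map_mul, h1, zero_mul]
  | add f _ g _ h1 h2 => rw [Finsupp.add_apply, coeff_add, h1, h2, add_zero]

namespace MinimalGradedFreeResolution

variable {U : Set (ZMod n →₀ ℕ)} {hU : IsUpperSet U} {β : ℕ → ℕ → ℕ}
  (res : MinimalGradedFreeResolution K n (restrictSupportIdeal (R := K) U hU) β)

lemma map_mem_piece (i : ℕ) (b : ℕ) (x : GradedFreeMod K n (β (i + 1)))
    (hx : x ∈ (sigmaGrading K n (β (i + 1))).piece b) :
    res.d i x ∈ (sigmaGrading K n (β i)).piece b :=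
  isHomogElem_iff.1 (res.graded i b x (isHomogElem_iff.2 hx))

lemma aug_mem_piece (b : ℕ) (x : GradedFreeMod K n (β 0))
    (hx : x ∈ (sigmaGrading K n (β 0)).piece b) :
    res.aug x ∈ (quotientGrading (restrictSupportIdeal (R := K) U hU) 0).piece b := by
  obtain ⟨p, hp, h⟩ := res.aug_graded b x (isHomogElem_iff.2 hx)
  refine ⟨p, mem_shiftedPiece.2 fun u hu => ?_, h.symm⟩
  exact (zero_add _).trans ((DFunLike.congr_fun Finsupp.degree_eq_weight_one u).trans (hp hu))

/-- The functors of the syzygy modules. -/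
noncomputable def syzygy : ℕ → MonomialCat (ZMod n) ⥤ ModuleCat.{0} K
  | 0 => monomialQuotient K hU 0
  | i + 1 => ((sigmaGrading K n (β i)).sub (LinearMap.range (res.d i))).functor

lemma comp_eq_zero_of_minimal (i j : ℕ)
    (η : (sigmaGrading K n (β i)).functor ⟶ residueField (ZMod n) K j) :
    ((sigmaGrading K n (β i)).sub (LinearMap.range (res.d i))).map (sigmaGrading K n (β i))
      LinearMap.id (fun _ _ hx => hx.1) ≫ η = 0 := by
  ext b x
  exact freeGrading_app_eq_zero _ (residueField_map_eq_zero j) η b ⟨x.1, x.2.1⟩ fun s =>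
    coeff_zero_of_mem_irrelevantIdeal_smul (res.minimal i x.2.2) s

lemma nonempty_ext_syzygy (i j : ℕ) :
    Nonempty (Ext (res.syzygy i) (residueField (ZMod n) K j) 0 ≃ₗ[K]
      ((sigmaGrading K n (β i)).functor ⟶ residueField (ZMod n) K j)) ∧
    ∀ k, Nonempty (Ext (res.syzygy i) (residueField (ZMod n) K j) (k + 1) ≃ₗ[K]
      Ext (res.syzygy (i + 1)) (residueField (ZMod n) K j) k) := by
  cases i with
  | zero =>
    obtain ⟨w, hw⟩ := exists_shortExact_sub (sigmaGrading K n (β 0)) _ res.aug res.aug_mem_piece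
      (fun b y hy => exists_mem_freeGrading_of_mem_range (quotientProjections hU 0)
        res.aug_mem_piece hy (res.aug_surjective y)) _ res.exact_at_zero
    exact hw.nonempty_ext_linearEquiv_of_comp_eq_zero (res.comp_eq_zero_of_minimal 0 j)
  | succ i =>
    obtain ⟨w, hw⟩ := exists_shortExact_sub (sigmaGrading K n (β (i + 1)))
      ((sigmaGrading K n (β i)).sub (LinearMap.range (res.d i))) (res.d i)
      (fun b x hx => ⟨res.map_mem_piece i b x hx, x, rfl⟩)
      (fun b y hy => exists_mem_freeGrading_of_mem_range (freeProjections _)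
        (res.map_mem_piece i) hy.1 hy.2) _ (res.exact i)
    exact hw.nonempty_ext_linearEquiv_of_comp_eq_zero (res.comp_eq_zero_of_minimal (i + 1) j)

lemma nonempty_ext_syzygy_linearEquiv (j k : ℕ) : ∀ i,
    Nonempty (Ext (res.syzygy i) (residueField (ZMod n) K j) k ≃ₗ[K]
      ((sigmaGrading K n (β (i + k))).functor ⟶ residueField (ZMod n) K j)) := by
  induction k with
  | zero => exact fun i => (res.nonempty_ext_syzygy i j).1
  | succ k ih =>
    intro i
    obtain ⟨e⟩ := (res.nonempty_ext_syzygy i j).2 k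
    obtain ⟨e'⟩ := ih (i + 1)
    rw [show i + (k + 1) = i + 1 + k by omega]
    exact ⟨e.trans e'⟩

/-- The graded Betti numbers are the dimensions of graded `Ext` groups into the residue field. -/
lemma finrank_ext_eq
    (res : MinimalGradedFreeResolution K n (restrictSupportIdeal (R := K) U hU) β) (i j : ℕ) :
    Module.finrank K (Ext (monomialQuotient K hU 0) (residueField (ZMod n) K j) i) = β i j := by
  obtain ⟨e⟩ := res.nonempty_ext_syzygy_linearEquiv j i 0
  have : Fintype {s : Σ j : ℕ, Fin (β (0 + i) j) // s.1 = j} :=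
    Fintype.ofEquiv _ (Equiv.sigmaSubtype j).symm
  refine e.finrank_eq.trans ?_
  rw [finrank_freeGrading_hom, Fintype.card_congr (Equiv.sigmaSubtype j), Fintype.card_fin,
    zero_add]

end MinimalGradedFreeResolution

end GradedResolution

section ProjectiveDimension

lemma chainComplexOf_d {C : Type*} [Category* C] [Abelian C] (X : ℕ → C)
    (d : ∀ i, X (i + 1) ⟶ X i) (hd : ∀ i, d (i + 1) ≫ d i = 0) (i : ℕ) :
    (ChainComplex.of X d hd).d (i + 1) i = d i := by
  simp

/-- A projective resolution from an exact sequence of projective objects. -/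
noncomputable def projectiveResolutionOfExact {C : Type*} [Category* C] [Abelian C] (X : ℕ → C)
    [∀ i, Projective (X i)] {Z : C} (d : ∀ i, X (i + 1) ⟶ X i) (ε : X 0 ⟶ Z) [Epi ε]
    (hd : ∀ i, d (i + 1) ≫ d i = 0) (hε : d 0 ≫ ε = 0)
    (he : ∀ i, (ShortComplex.mk _ _ (hd i)).Exact) (h0 : (ShortComplex.mk _ _ hε).Exact) :
    ProjectiveResolution Z where
  complex := ChainComplex.of X d hd
  projective i := inferInstanceAs (Projective (X i))
  π := (ChainComplex.toSingle₀Equiv _ _).symm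
    ⟨ε, (congrArg (· ≫ ε) (chainComplexOf_d X d hd 0)).trans hε⟩
  quasiIso := ⟨fun n => by
    cases n with
    | zero =>
      rw [ChainComplex.quasiIsoAt₀_iff, ShortComplex.quasiIso_iff_of_zeros']
      · refine (ShortComplex.exact_and_epi_g_iff_of_iso
          (S₂ := ShortComplex.mk _ _ hε) ?_).2 ⟨h0, inferInstance⟩
        refine ShortComplex.isoMk (Iso.refl _) (Iso.refl _) (Iso.refl _) ?_ ?_
        · exact (Category.id_comp _).trans
            ((chainComplexOf_d X d hd 0).symm.trans (Category.comp_id _).symm)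
        · refine (Category.id_comp _).trans (Eq.trans ?_ (Category.comp_id _).symm)
          exact (ChainComplex.toSingle₀Equiv_symm_apply_f_zero (C := ChainComplex.of X d hd) ε
            ((congrArg (· ≫ ε) (chainComplexOf_d X d hd 0)).trans hε)).symm
      all_goals rfl
    | succ n =>
      rw [quasiIsoAt_iff_exactAt']
      · rw [HomologicalComplex.exactAt_iff' _ (n + 1 + 1) (n + 1) n (by simp) (by simp)]
        refine (ShortComplex.exact_iff_of_iso
          (S₁ := (ChainComplex.of X d hd).sc' (n + 1 + 1) (n + 1) n)
          (S₂ := ShortComplex.mk _ _ (hd n))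
            (ShortComplex.isoMk (Iso.refl _) (Iso.refl _) (Iso.refl _) ?_ ?_)).2 (he n)
        · exact (Category.id_comp _).trans
            ((chainComplexOf_d X d hd (n + 1)).symm.trans (Category.comp_id _).symm)
        · exact (Category.id_comp _).trans
            ((chainComplexOf_d X d hd n).symm.trans (Category.comp_id _).symm)
      · apply ChainComplex.exactAt_succ_single_obj⟩

section Ext

variable {R : Type} [CommRing R] {Z : ModuleCat.{0} R} (P : ProjectiveResolution Z)
  {Y : ModuleCat.{0} R}

lemma subsingleton_ext_iff (i : ℕ) :
    Subsingleton (((Ext R (ModuleCat R) i).obj (Opposite.op Z)).obj Y) ↔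
      (P.complex.linearYonedaObj R Y).ExactAt i := by
  rw [HomologicalComplex.exactAt_iff_isZero_homology, ← (P.isoExt i Y).isZero_iff,
    ModuleCat.isZero_iff_subsingleton]

lemma subsingleton_ext_of_isZero {i : ℕ} (h : Limits.IsZero (P.complex.X i)) :
    Subsingleton (((Ext R (ModuleCat R) i).obj (Opposite.op Z)).obj Y) := by
  rw [subsingleton_ext_iff P, HomologicalComplex.exactAt_iff]
  refine ShortComplex.exact_of_isZero_X₂ _ ?_
  rw [Limits.IsZero.iff_id_eq_zero]
  ext (x : _ ⟶ _)
  obtain rfl : x = 0 := h.eq_of_src _ _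
  rfl

lemma eq_zero_of_subsingleton_ext {i : ℕ}
    (h : Subsingleton (((Ext R (ModuleCat R) (i + 1)).obj (Opposite.op Z)).obj Y))
    (h0 : ∀ g : P.complex.X i ⟶ Y, P.complex.d (i + 1) i ≫ g = 0) (f : P.complex.X (i + 1) ⟶ Y)
    (h1 : P.complex.d (i + 2) (i + 1) ≫ f = 0) : f = 0 := by
  rw [subsingleton_ext_iff P, HomologicalComplex.exactAt_iff' _ i (i + 1) (i + 2) (by simp)
    (by simp), ShortComplex.moduleCat_exact_iff] at h
  obtain ⟨g, hg⟩ := h f h1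
  exact hg.symm.trans (h0 g)

end Ext

end ProjectiveDimension

namespace MinimalGradedFreeResolution

variable {K : Type} [Field K] {n : ℕ} {I : Ideal (MvPolynomial (ZMod n) K)} {β : ℕ → ℕ → ℕ}
  (res : MinimalGradedFreeResolution K n I β)

lemma ofHom_d_comp_ofHom_d (i : ℕ) :
    ModuleCat.ofHom (res.d (i + 1)) ≫ ModuleCat.ofHom (res.d i) = 0 :=
  ModuleCat.hom_ext (LinearMap.exact_iff.2 (res.exact i)).linearMap_comp_eq_zero

/-- The underlying ungraded projective resolution. -/
noncomputable def projectiveResolution :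
    ProjectiveResolution (ModuleCat.of (MvPolynomial (ZMod n) K) (MvPolynomial (ZMod n) K ⧸ I)) :=
  have : Epi (ModuleCat.ofHom res.aug) := (ModuleCat.epi_iff_surjective _).2 res.aug_surjective
  have (i : ℕ) : Projective (ModuleCat.of (MvPolynomial (ZMod n) K) (GradedFreeMod K n (β i))) :=
    ModuleCat.projective_of_free Finsupp.basisSingleOne
  have h (i : ℕ) : Function.Exact (res.d (i + 1)) (res.d i) := LinearMap.exact_iff.2 (res.exact i)
  have h0 : Function.Exact (res.d 0) res.aug := LinearMap.exact_iff.2 res.exact_at_zero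
  projectiveResolutionOfExact
    (fun i => ModuleCat.of (MvPolynomial (ZMod n) K) (GradedFreeMod K n (β i)))
    (fun i => ModuleCat.ofHom (res.d i)) (ModuleCat.ofHom res.aug)
    res.ofHom_d_comp_ofHom_d
    (ModuleCat.hom_ext h0.linearMap_comp_eq_zero)
    (fun i => (ShortComplex.moduleCat_exact_iff _).2 fun x hx => (h i x).1 hx)
    ((ShortComplex.moduleCat_exact_iff _).2 fun x hx => (h0 x).1 hx)

lemma projectiveResolution_d (i : ℕ) :
    res.projectiveResolution.complex.d (i + 1) i = ModuleCat.ofHom (res.d i) :=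
  chainComplexOf_d (fun i => ModuleCat.of _ (GradedFreeMod K n (β i)))
    (fun i => ModuleCat.ofHom (res.d i)) res.ofHom_d_comp_ofHom_d i

lemma projectiveResolution_d_comp (i : ℕ) (g : res.projectiveResolution.complex.X i ⟶
    ModuleCat.of _ (MvPolynomial (ZMod n) K ⧸ irrelevantIdeal K n)) :
    res.projectiveResolution.complex.d (i + 1) i ≫ g = 0 := by
  rw [projectiveResolution_d]
  let φ : GradedFreeMod K n (β i) →ₗ[MvPolynomial (ZMod n) K]
    (MvPolynomial (ZMod n) K ⧸ irrelevantIdeal K n) := g.hom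
  have hφ : irrelevantIdeal K n •
      (⊤ : Submodule (MvPolynomial (ZMod n) K) (GradedFreeMod K n (β i))) ≤ LinearMap.ker φ := by
    refine Submodule.smul_le.2 fun r hr x _ => ?_
    obtain ⟨p, hp⟩ := Ideal.Quotient.mk_surjective (φ x)
    rw [LinearMap.mem_ker, map_smul, ← hp]
    exact Ideal.Quotient.eq_zero_iff_mem.2 (Ideal.mul_mem_right p _ hr)
  exact ModuleCat.hom_ext (LinearMap.ext fun x => hφ (res.minimal i ⟨x, rfl⟩))

lemma projDim_eq (res : MinimalGradedFreeResolution K n I β) {d j : ℕ} (hd : β (d + 1) j ≠ 0)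
    (h : ∀ i > d + 1, ∀ j, β i j = 0) :
    projDim (MvPolynomial (ZMod n) K) (MvPolynomial (ZMod n) K ⧸ I) = (d + 1 : ℕ) := by
  refine le_antisymm (sInf_le fun i hi N => ?_) (le_sInf fun e he => ?_)
  · refine subsingleton_ext_of_isZero res.projectiveResolution ?_
    have : IsEmpty (Σ j : ℕ, Fin (β i j)) := ⟨fun s =>
      Fin.elim0 (h i (by exact_mod_cast hi) s.1 ▸ s.2)⟩
    exact ModuleCat.isZero_of_iff_subsingleton.2
      (inferInstanceAs (Subsingleton (GradedFreeMod K n (β i))))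
  · by_contra! hlt
    let s : Σ j : ℕ, Fin (β (d + 1) j) := ⟨j, 0, Nat.pos_of_ne_zero hd⟩
    let f : GradedFreeMod K n (β (d + 1)) →ₗ[MvPolynomial (ZMod n) K]
        (MvPolynomial (ZMod n) K ⧸ irrelevantIdeal K n) :=
      (Submodule.mkQ (irrelevantIdeal K n)).comp (Finsupp.lapply s)
    have hf := eq_zero_of_subsingleton_ext res.projectiveResolution (he (d + 1) hlt _)
      (res.projectiveResolution_d_comp d) (ModuleCat.ofHom f)
      (res.projectiveResolution_d_comp (d + 1) _)
    have hf' : f (Finsupp.single s 1) = 0 := congrArg (fun g => g.hom (Finsupp.single s 1)) hf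
    have h1 : (1 : MvPolynomial (ZMod n) K) ∈ irrelevantIdeal K n := by
      refine Ideal.Quotient.eq_zero_iff_mem.1 (Eq.trans ?_ hf')
      change Ideal.Quotient.mk (irrelevantIdeal K n) 1 =
        Ideal.Quotient.mk (irrelevantIdeal K n) (Finsupp.single s 1 s)
      rw [Finsupp.single_eq_same]
    have h2 := irrelevantIdeal_le_ker_constantCoeff h1
    simp at h2

end MinimalGradedFreeResolution

/-- For `n ≡ 1 (mod 3)`, `n ≥ 4`: the graded Betti number `β_{(2n+1)/3, n}` of `R/I(Cₙ)`
(read off any minimal graded free resolution) equals `1`, and the projective dimension of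
`R/I(Cₙ)` equals `(2n+1)/3`. -/
theorem cycle_top_betti_one_mod_three (K : Type) [Field K] (n : ℕ) (hn : 4 ≤ n)
    (h3 : n % 3 = 1) (β : ℕ → ℕ → ℕ)
    (res : MinimalGradedFreeResolution K n (cycleIdeal K n) β) :
    β ((2 * n + 1) / 3) n = 1 ∧
      projDim (MvPolynomial (ZMod n) K) (MvPolynomial (ZMod n) K ⧸ cycleIdeal K n) =
        (((2 * n + 1) / 3 : ℕ) : ℕ∞) := by
  obtain ⟨k, rfl⟩ : ∃ k, n = 3 * k + 4 := ⟨(n - 4) / 3, by omega⟩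
  have hk : (2 * (3 * k + 4) + 1) / 3 = 2 * k + 3 := by omega
  rw [hk]
  clear hk h3
  obtain ⟨hS, h1⟩ := ext_cycleSet K k
  revert res
  rw [cycleIdeal_eq_restrictSupportIdeal K (3 * k + 4) (by omega)]
  intro res
  have hβ : β (2 * k + 3) (3 * k + 4) = 1 := by
    rw [← res.finrank_ext_eq]
    have h := h1 0
    rwa [zero_add] at h
  refine ⟨hβ, res.projDim_eq (d := 2 * k + 2) (j := 3 * k + 4) ?_ fun i hi j => ?_⟩
  · rw [hβ]
    exact one_ne_zero
  · rw [← res.finrank_ext_eq]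
    have := hS 0 i j fun _ _ => by omega
    exact Module.finrank_zero_of_subsingleton
end

section
/- Let $K$ be a field, $R = K[x_1,x_2,x_3,y_2,y_3]$, and let $I(G) = (x_1x_2, x_2x_3, x_1x_3, x_1y_2, y_2y_3, x_1y_3)$ be the edge ideal of two triangles joined at the vertex $x_1$. Then the projective dimension of $R/I(G)$ is exactly $4$, and the arithmetical rank of $I(G)$ is exactly $4$. -/
open MvPolynomial

/-- Arithmetical rank: the least number of elements of `R` generating `I` up to radical. -/
noncomputable def araRank {R : Type} [CommRing R] (I : Ideal R) : ℕ :=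
  sInf {s : ℕ | ∃ f : Fin s → R, (Ideal.span (Set.range f)).radical = I.radical}

/-- The edge ideal of two triangles joined at the vertex `x₁`, in
`R = K[x₁,x₂,x₃,y₂,y₃]` (variables `X 0, X 1, X 2, X 3, X 4`). -/
noncomputable def twoTrianglesIdeal (K : Type) [Field K] : Ideal (MvPolynomial (Fin 5) K) :=
  Ideal.span {X 0 * X 1, X 1 * X 2, X 0 * X 2, X 0 * X 3, X 3 * X 4, X 0 * X 4}

section ExtComparison

open CategoryTheory

variable {R : Type} [CommRing R]

/-- The derived-functor `Ext` and the derived-category `Ext` vanish simultaneously in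
positive degrees. -/
lemma subsingleton_ext_obj_iff (M N : ModuleCat R) (n : ℕ) :
    Subsingleton (((Ext R (ModuleCat R) (n + 1)).obj (Opposite.op M)).obj N) ↔
      Subsingleton (Abelian.Ext M N (n + 1)) := by
  let P := projectiveResolution M
  have hOld : Subsingleton (((Ext R (ModuleCat R) (n + 1)).obj (Opposite.op M)).obj N) ↔
      ∀ f : P.complex.X (n + 1) ⟶ N, P.complex.d (n + 2) (n + 1) ≫ f = 0 →
        ∃ g : P.complex.X n ⟶ N, P.complex.d (n + 1) n ≫ g = f := by
    rw [← ModuleCat.isZero_iff_subsingleton, (P.isoExt (n + 1) N).isZero_iff,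
      ← HomologicalComplex.exactAt_iff_isZero_homology,
      HomologicalComplex.exactAt_iff' _ n (n + 1) (n + 2) (by simp) (by simp),
      ShortComplex.moduleCat_exact_iff]
    rfl
  have hNew : Subsingleton (Abelian.Ext M N (n + 1)) ↔
      ∀ f : P.complex.X (n + 1) ⟶ N, P.complex.d (n + 2) (n + 1) ≫ f = 0 →
        ∃ g : P.complex.X n ⟶ N, P.complex.d (n + 1) n ≫ g = f := by
    constructor
    · intro h f hf
      exact (P.extMk_eq_zero_iff f (n + 2) rfl hf n rfl).1 (Subsingleton.elim _ _)
    · refine fun h ↦ subsingleton_of_forall_eq 0 fun α ↦ ?_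
      obtain ⟨f, hf, rfl⟩ := P.extMk_surjective α (n + 2) rfl
      exact (P.extMk_eq_zero_iff f (n + 2) rfl hf n rfl).2 (h f hf)
  rw [hOld, hNew]

lemma projDim_eq_of_hasProjectiveDimensionLT {M : Type} [AddCommGroup M] [Module R M] {n : ℕ}
    (h : HasProjectiveDimensionLT (ModuleCat.of R M) (n + 2)) (N : ModuleCat R)
    (hN : Nontrivial (Abelian.Ext (ModuleCat.of R M) N (n + 1))) :
    projDim R M = ((n + 1 : ℕ) : ℕ∞) := by
  refine le_antisymm (sInf_le fun i hi N' ↦ ?_) (le_sInf fun d hd ↦ ?_)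
  · have hi : n + 1 < i := by exact_mod_cast hi
    obtain ⟨k, rfl⟩ := Nat.exists_eq_add_of_lt hi
    exact (subsingleton_ext_obj_iff _ _ _).2
      (HasProjectiveDimensionLT.subsingleton _ (n + 2) _ (by lia) _)
  · by_contra! hlt
    exact not_subsingleton_iff_nontrivial.2 hN ((subsingleton_ext_obj_iff _ _ _).1 (hd _ hlt N))

end ExtComparison

section ColonSequence

open CategoryTheory

variable {R : Type} [CommRing R]

/-- The complex `R ⧸ J' → R ⧸ J → R ⧸ L` whose first map is multiplication by `f`. -/
noncomputable def colonComplex (f : R) {J' J L : Ideal R} (h : ∀ r, r ∈ J' ↔ f * r ∈ J)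
    (hL : L = J ⊔ Ideal.span {f}) : ShortComplex (ModuleCat R) :=
  ShortComplex.moduleCatMk
    (Submodule.mapQ J' J (LinearMap.mulLeft R f) fun r hr ↦ (h r).1 hr)
    (Submodule.factor (show J ≤ L from hL ▸ le_sup_left)) (by
      ext
      exact (Submodule.Quotient.mk_eq_zero L).2
        (hL ▸ Ideal.mem_sup_right (Ideal.mul_mem_right _ _ (Ideal.mem_span_singleton_self f))))

lemma colonComplex_shortExact (f : R) {J' J L : Ideal R} (h : ∀ r, r ∈ J' ↔ f * r ∈ J)
    (hL : L = J ⊔ Ideal.span {f}) : (colonComplex f h hL).ShortExact where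
  exact := by
    rw [ShortComplex.moduleCat_exact_iff]
    intro x hx
    obtain ⟨x, rfl⟩ := Submodule.Quotient.mk_surjective _ x
    have hx : x ∈ L := (Submodule.Quotient.mk_eq_zero L).1 hx
    rw [hL] at hx
    obtain ⟨j, hj, y, hy, rfl⟩ := Submodule.mem_sup.1 hx
    obtain ⟨a, rfl⟩ := Ideal.mem_span_singleton'.1 hy
    refine ⟨Submodule.Quotient.mk a, (Submodule.Quotient.eq J).2 ?_⟩
    have : f * a - (j + a * f) = -j := by ring
    exact this ▸ J.neg_mem hj
  mono_f := by
    rw [ModuleCat.mono_iff_injective, injective_iff_map_eq_zero]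
    intro x hx
    obtain ⟨x, rfl⟩ := Submodule.Quotient.mk_surjective _ x
    exact (Submodule.Quotient.mk_eq_zero J').2 ((h x).2 ((Submodule.Quotient.mk_eq_zero J).1 hx))
  epi_g := by
    rw [ModuleCat.epi_iff_surjective]
    exact Submodule.factor_surjective (hL ▸ le_sup_left)

lemma hasProjectiveDimensionLT_quotient_sup_span {f : R} {J L : Ideal R}
    (h : ∀ r, f * r ∈ J → r ∈ J) (hL : L = J ⊔ Ideal.span {f}) {n : ℕ}
    (hJ : HasProjectiveDimensionLT (ModuleCat.of R (R ⧸ J)) n) :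
    HasProjectiveDimensionLT (ModuleCat.of R (R ⧸ L)) (n + 1) :=
  (colonComplex_shortExact f (fun r ↦ ⟨J.mul_mem_left f, h r⟩) hL).hasProjectiveDimensionLT_X₃ n hJ
    (hasProjectiveDimensionLT_of_ge (ModuleCat.of R (R ⧸ J)) n _ n.le_succ)

lemma nontrivial_ext_quotient_sup_span {f : R} {J L : Ideal R}
    (h : ∀ r, f * r ∈ J → r ∈ J) (hL : L = J ⊔ Ideal.span {f}) {N : ModuleCat R}
    (hN : f • 𝟙 N = 0) {n : ℕ} (hJ : Nontrivial (Abelian.Ext (ModuleCat.of R (R ⧸ J)) N n)) :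
    Nontrivial (Abelian.Ext (ModuleCat.of R (R ⧸ L)) N (n + 1)) := by
  have hS := colonComplex_shortExact f (fun r ↦ ⟨J.mul_mem_left f, h r⟩) hL
  by_contra hsub
  rw [not_nontrivial_iff_subsingleton] at hsub
  refine not_subsingleton_iff_nontrivial.2 hJ (subsingleton_of_forall_eq 0 fun x ↦ ?_)
  obtain ⟨z, rfl⟩ := Abelian.Ext.contravariant_sequence_exact₁ hS N x (add_comm 1 n)
    (hsub.elim _ _)
  have hf : (colonComplex f (fun r ↦ ⟨J.mul_mem_left f, h r⟩) hL).f =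
      f • 𝟙 (ModuleCat.of R (R ⧸ J)) := by
    ext x
    obtain ⟨x, rfl⟩ := Submodule.Quotient.mk_surjective _ x
    rfl
  have hz : f • z = 0 := by
    rw [← z.comp_mk₀_id, ← Abelian.Ext.comp_smul, ← Abelian.Ext.mk₀_smul, hN,
      Abelian.Ext.mk₀_zero, Abelian.Ext.comp_zero]
  have hfz (y : Abelian.Ext (ModuleCat.of R (R ⧸ J)) N n) :
      (Abelian.Ext.mk₀ (f • 𝟙 (ModuleCat.of R (R ⧸ J)))).comp y (zero_add n) = f • y := by
    rw [Abelian.Ext.mk₀_smul, Abelian.Ext.smul_comp, Abelian.Ext.mk₀_id_comp]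
  exact (congrArg (fun g ↦ (Abelian.Ext.mk₀ g).comp z (zero_add n)) hf).trans ((hfz z).trans hz)

lemma nontrivial_ext_of_colon {f : R} {J' J L : Ideal R} (h : ∀ r, r ∈ J' ↔ f * r ∈ J)
    (hL : L = J ⊔ Ideal.span {f}) {N : ModuleCat R} {n : ℕ}
    (hd : HasProjectiveDimensionLT (ModuleCat.of R (R ⧸ L)) (n + 1))
    (hJ' : Nontrivial (Abelian.Ext (ModuleCat.of R (R ⧸ J')) N n)) :
    Nontrivial (Abelian.Ext (ModuleCat.of R (R ⧸ J)) N n) := by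
  by_contra hsub
  rw [not_nontrivial_iff_subsingleton] at hsub
  refine not_subsingleton_iff_nontrivial.2 hJ' (subsingleton_of_forall_eq 0 fun x ↦ ?_)
  have hsub' := HasProjectiveDimensionLT.subsingleton (ModuleCat.of R (R ⧸ L)) (n + 1) _ le_rfl N
  obtain ⟨z, rfl⟩ := Abelian.Ext.contravariant_sequence_exact₁ (colonComplex_shortExact f h hL)
    N x (add_comm 1 n) (hsub'.elim _ _)
  obtain rfl : z = 0 := hsub.elim _ _
  exact Abelian.Ext.comp_zero (Abelian.Ext.mk₀ (colonComplex f h hL).f) N n n (zero_add n)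

lemma hasProjectiveDimensionLT_quotient_bot :
    HasProjectiveDimensionLT (ModuleCat.of R (R ⧸ (⊥ : Ideal R))) 1 := by
  have : Module.Free R (R ⧸ (⊥ : Ideal R)) :=
    .of_equiv (Submodule.quotEquivOfEqBot (⊥ : Ideal R) rfl).symm
  infer_instance

lemma nontrivial_ext_zero_quotient_bot (N : ModuleCat R) [Nontrivial N] :
    Nontrivial (Abelian.Ext (ModuleCat.of R (R ⧸ (⊥ : Ideal R))) N 0) := by
  obtain ⟨x, hx⟩ := exists_ne (0 : N)
  refine ⟨.mk₀ (ModuleCat.ofHom ((LinearMap.toSpanSingleton R N x) ∘ₗ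
    (Submodule.quotEquivOfEqBot (⊥ : Ideal R) rfl).toLinearMap)), 0, fun h ↦ hx ?_⟩
  rw [← Abelian.Ext.mk₀_zero, (Abelian.Ext.mk₀_bijective _ _).1.eq_iff] at h
  exact (one_smul R x).symm.trans (congrArg (fun g ↦ g.hom (Submodule.Quotient.mk 1)) h)

end ColonSequence

section VariableIdeals

variable {σ K : Type} [Field K]

lemma MvPolynomial.exists_ker_eq_span_X_image (s : Set σ) :
    ∃ φ : MvPolynomial σ K →ₐ[K] MvPolynomial σ K, RingHom.ker φ = Ideal.span (X '' s) ∧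
      ∀ i ∉ s, φ (X i) = X i := by
  classical
  let φ : MvPolynomial σ K →ₐ[K] MvPolynomial σ K := aeval fun i ↦ if i ∈ s then 0 else X i
  refine ⟨φ, le_antisymm (fun p hp ↦ ?_) (Ideal.span_le.2 ?_), fun i hi ↦ by simp [φ, hi]⟩
  · have h : (Ideal.Quotient.mkₐ K (Ideal.span (X '' s))).comp φ =
        Ideal.Quotient.mkₐ K (Ideal.span (X '' s)) := by
      ext i
      by_cases hi : i ∈ s
      · have := Ideal.Quotient.eq_zero_iff_mem.2
          (Ideal.subset_span (Set.mem_image_of_mem (X (R := K)) hi))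
        simp [φ, hi, this]
      · simp [φ, hi]
    have := DFunLike.congr_fun h p
    rw [AlgHom.comp_apply, (RingHom.mem_ker).1 hp, map_zero] at this
    exact Ideal.Quotient.eq_zero_iff_mem.1 this.symm
  · rintro _ ⟨i, hi, rfl⟩
    simp [φ, hi]

instance MvPolynomial.isPrime_span_X_image (s : Set σ) :
    (Ideal.span (X '' s) : Ideal (MvPolynomial σ K)).IsPrime := by
  obtain ⟨φ, hφ, -⟩ := exists_ker_eq_span_X_image (K := K) s
  exact hφ ▸ RingHom.ker_isPrime φ

lemma MvPolynomial.X_mem_span_X_image {s : Set σ} {i : σ} :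
    (X i : MvPolynomial σ K) ∈ Ideal.span (X '' s) ↔ i ∈ s := by
  refine ⟨fun h ↦ ?_, fun h ↦ Ideal.subset_span (Set.mem_image_of_mem _ h)⟩
  by_contra hi
  obtain ⟨φ, hφ, hφi⟩ := exists_ker_eq_span_X_image (K := K) s
  rw [← hφ, RingHom.mem_ker, hφi i hi] at h
  exact X_ne_zero i h

lemma MvPolynomial.mem_span_X_image_of_X_mul_mem {s : Set σ} {i : σ} (hi : i ∉ s)
    {p : MvPolynomial σ K} (h : X i * p ∈ Ideal.span (X '' s)) : p ∈ Ideal.span (X '' s) :=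
  ((isPrime_span_X_image s).mem_or_mem h).resolve_left (mt X_mem_span_X_image.1 hi)

lemma MvPolynomial.span_X_image_insert (s : Set σ) (i : σ) :
    (Ideal.span (X '' insert i s) : Ideal (MvPolynomial σ K)) =
      Ideal.span (X '' s) ⊔ Ideal.span {X i} := by
  rw [Set.image_insert_eq, Ideal.span_insert, sup_comm]

lemma MvPolynomial.card_le_height_span_X_image [Finite σ] (s : Finset σ) :
    (s.card : ℕ∞) ≤ (Ideal.span (X '' (s : Set σ)) : Ideal (MvPolynomial σ K)).height := by
  classical
  induction s using Finset.induction_on with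
  | empty => simp
  | insert i s hi ih =>
    rw [Finset.card_insert_of_notMem hi, Nat.cast_add, Nat.cast_one]
    refine (add_le_add_left ih 1).trans (Ideal.height_add_one_le_of_lt_of_isPrime
      (SetLike.lt_iff_le_and_exists.2 ⟨?_, X i, ?_, ?_⟩))
    · exact Ideal.span_mono (Set.image_mono (by simp))
    · exact X_mem_span_X_image.2 (by simp)
    · exact mt X_mem_span_X_image.1 (by simpa using hi)

open CategoryTheory

lemma MvPolynomial.hasProjectiveDimensionLT_quotient_span_X_image (s : Finset σ) :
    HasProjectiveDimensionLT (ModuleCat.of (MvPolynomial σ K)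
      (MvPolynomial σ K ⧸ (Ideal.span (X '' (s : Set σ)) : Ideal (MvPolynomial σ K)))) (s.card + 1) := by
  classical
  induction s using Finset.induction_on with
  | empty =>
    rw [Finset.coe_empty, Set.image_empty, Ideal.span_empty]
    exact hasProjectiveDimensionLT_quotient_bot
  | insert i s hi ih =>
    rw [Finset.card_insert_of_notMem hi, Finset.coe_insert]
    exact hasProjectiveDimensionLT_quotient_sup_span
      (fun r ↦ mem_span_X_image_of_X_mul_mem (by simpa using hi)) (span_X_image_insert _ _) ih

lemma MvPolynomial.nontrivial_ext_quotient_span_X_image (s : Finset σ)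
    (N : ModuleCat (MvPolynomial σ K)) [Nontrivial N]
    (hN : ∀ i ∈ s, (X i : MvPolynomial σ K) • 𝟙 N = 0) :
    Nontrivial (Abelian.Ext (ModuleCat.of (MvPolynomial σ K)
      (MvPolynomial σ K ⧸ (Ideal.span (X '' (s : Set σ)) : Ideal (MvPolynomial σ K)))) N s.card) := by
  classical
  induction s using Finset.induction_on with
  | empty =>
    rw [Finset.coe_empty, Set.image_empty, Ideal.span_empty]
    exact nontrivial_ext_zero_quotient_bot N
  | insert i s hi ih =>
    rw [Finset.card_insert_of_notMem hi, Finset.coe_insert]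
    exact nontrivial_ext_quotient_sup_span
      (fun r ↦ mem_span_X_image_of_X_mul_mem (by simpa using hi)) (span_X_image_insert _ _)
      (hN i (by simp)) (ih fun j hj ↦ hN j (by simp [hj]))

end VariableIdeals

section TwoTriangles

open CategoryTheory

variable (K : Type) [Field K]

/-- The ideal generated by all the variables other than `X 0`. -/
noncomputable abbrev outerIdeal : Ideal (MvPolynomial (Fin 5) K) :=
  Ideal.span (X '' (({1, 2, 3, 4} : Finset (Fin 5)) : Set (Fin 5)))

lemma twoTrianglesIdeal_le_outerIdeal : twoTrianglesIdeal K ≤ outerIdeal K := by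
  have hX (i : Fin 5) (hi : i ≠ 0) : X i ∈ outerIdeal K := by
    rw [X_mem_span_X_image]
    fin_cases i <;> simp_all
  rw [twoTrianglesIdeal, Ideal.span_le]
  rintro _ (rfl | rfl | rfl | rfl | rfl | rfl) <;>
    exact Ideal.mul_mem_left _ _ (hX _ (by decide))

lemma mem_outerIdeal_iff_X_mul_mem (r : MvPolynomial (Fin 5) K) :
    r ∈ outerIdeal K ↔ X 0 * r ∈ twoTrianglesIdeal K := by
  refine ⟨fun hr ↦ ?_, fun hr ↦ mem_span_X_image_of_X_mul_mem (by simp)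
    (twoTrianglesIdeal_le_outerIdeal K hr)⟩
  have : outerIdeal K ≤ Submodule.comap
      (LinearMap.mulLeft (MvPolynomial (Fin 5) K) (X 0)) (twoTrianglesIdeal K) := by
    refine Submodule.span_le.2 ?_
    rintro _ ⟨i, hi, rfl⟩
    simp only [Finset.coe_insert, Finset.coe_singleton, Set.mem_insert_iff,
      Set.mem_singleton_iff] at hi
    rcases hi with rfl | rfl | rfl | rfl <;> exact Ideal.subset_span (by simp)
  exact this hr

lemma mem_sup_span_X_mul_X {s : Set (Fin 5)} {i j : Fin 5}
    {r : MvPolynomial (Fin 5) K} (hi : r ∈ Ideal.span (X '' insert i s))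
    (hr : r ∈ Ideal.span (X '' insert j s)) (hij : i ∉ insert j s) :
    r ∈ Ideal.span (X '' s) ⊔ Ideal.span {X i * X j} := by
  rw [span_X_image_insert] at hi
  obtain ⟨p, hp, q, hq, rfl⟩ := Submodule.mem_sup.1 hi
  obtain ⟨q, rfl⟩ := Ideal.mem_span_singleton.1 hq
  have hp' : p ∈ Ideal.span (X '' insert j s) :=
    Ideal.span_mono (Set.image_mono (Set.subset_insert _ _)) hp
  have hq' := mem_span_X_image_of_X_mul_mem hij ((Ideal.add_mem_iff_right _ hp').1 hr)
  rw [span_X_image_insert] at hq'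
  obtain ⟨u, hu, v, hv, rfl⟩ := Submodule.mem_sup.1 hq'
  obtain ⟨v, rfl⟩ := Ideal.mem_span_singleton.1 hv
  rw [mul_add, ← add_assoc, ← mul_assoc]
  exact Submodule.add_mem_sup (Ideal.add_mem _ hp (Ideal.mul_mem_left _ _ hu))
    (Ideal.mul_mem_right _ _ (Ideal.mem_span_singleton_self _))

lemma hasProjectiveDimensionLT_quotient_sup_span_X_zero :
    HasProjectiveDimensionLT (ModuleCat.of (MvPolynomial (Fin 5) K)
      (MvPolynomial (Fin 5) K ⧸ (twoTrianglesIdeal K ⊔ Ideal.span {X 0}))) 4 := by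
  have h₁ := hasProjectiveDimensionLT_quotient_span_X_image (K := K) ({0} : Finset (Fin 5))
  have h₂ := hasProjectiveDimensionLT_quotient_sup_span 
    (f := (X 1 * X 2 : MvPolynomial (Fin 5) K)) (fun r hr ↦ by
    rw [mul_assoc] at hr
    exact mem_span_X_image_of_X_mul_mem (i := 2) (by simp)
      (mem_span_X_image_of_X_mul_mem (i := 1) (by simp) hr)) rfl h₁
  refine hasProjectiveDimensionLT_quotient_sup_span 
    (f := (X 3 * X 4 : MvPolynomial (Fin 5) K)) (fun r hr ↦ ?_) ?_ h₂
  · have aux (i : Fin 5) (hi : i = 1 ∨ i = 2) :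
        r ∈ Ideal.span (X '' insert i (({0} : Finset (Fin 5)) : Set (Fin 5))) := by
      refine mem_span_X_image_of_X_mul_mem (i := 4) ?_
        (mem_span_X_image_of_X_mul_mem (i := 3) ?_ ?_)
      · rcases hi with rfl | rfl <;> simp
      · rcases hi with rfl | rfl <;> simp
      · rw [← mul_assoc]
        refine Set.mem_of_mem_of_subset hr (SetLike.coe_subset_coe.2 (sup_le ?_ ?_))
        · exact Ideal.span_mono (Set.image_mono (Set.subset_insert _ _))
        · rw [Ideal.span_singleton_le_iff_mem]
          rcases hi with rfl | rfl
          · exact Ideal.mul_mem_right _ _ (X_mem_span_X_image.2 (by simp))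
          · exact Ideal.mul_mem_left _ _ (X_mem_span_X_image.2 (by simp))
    exact mem_sup_span_X_mul_X K (aux 1 (by simp)) (aux 2 (by simp)) (by simp)
  · apply le_antisymm
    · refine sup_le ?_ ?_
      · rw [twoTrianglesIdeal, Ideal.span_le]
        have h0 : (X 0 : MvPolynomial (Fin 5) K) ∈
            (Ideal.span (X '' (({0} : Finset (Fin 5)) : Set (Fin 5))) ⊔
              Ideal.span {X 1 * X 2}) ⊔ Ideal.span {X 3 * X 4} :=
          Ideal.mem_sup_left (Ideal.mem_sup_left (X_mem_span_X_image.2 (by simp)))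
        rintro _ (rfl | rfl | rfl | rfl | rfl | rfl)
        · exact Ideal.mul_mem_right _ _ h0
        · exact Ideal.mem_sup_left (Ideal.mem_sup_right (Ideal.mem_span_singleton_self _))
        · exact Ideal.mul_mem_right _ _ h0
        · exact Ideal.mul_mem_right _ _ h0
        · exact Ideal.mem_sup_right (Ideal.mem_span_singleton_self _)
        · exact Ideal.mul_mem_right _ _ h0
      · simp [sup_assoc]
    · refine sup_le (sup_le ?_ ?_) ?_
      · simp
      · rw [Ideal.span_singleton_le_iff_mem]
        exact Ideal.mem_sup_left (Ideal.subset_span (by simp))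
      · rw [Ideal.span_singleton_le_iff_mem]
        exact Ideal.mem_sup_left (Ideal.subset_span (by simp))

lemma projDim_quotient_twoTrianglesIdeal :
    projDim (MvPolynomial (Fin 5) K) (MvPolynomial (Fin 5) K ⧸ twoTrianglesIdeal K) = 4 := by
  have hcard : ({1, 2, 3, 4} : Finset (Fin 5)).card = 4 := rfl
  have hL := hasProjectiveDimensionLT_quotient_sup_span_X_zero K
  have hP := hasProjectiveDimensionLT_quotient_span_X_image (K := K)
    ({1, 2, 3, 4} : Finset (Fin 5))
  have : Nontrivial (MvPolynomial (Fin 5) K ⧸ outerIdeal K) :=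
    Ideal.Quotient.nontrivial_iff.2 (isPrime_span_X_image _).ne_top
  have hE := nontrivial_ext_quotient_span_X_image (K := K) ({1, 2, 3, 4} : Finset (Fin 5))
    (ModuleCat.of _ (MvPolynomial (Fin 5) K ⧸ outerIdeal K)) (fun i hi ↦ by
      refine ModuleCat.hom_ext (LinearMap.ext fun x ↦ ?_)
      obtain ⟨x, rfl⟩ := Submodule.Quotient.mk_surjective _ x
      exact (Submodule.Quotient.mk_eq_zero _).2
        (Ideal.mul_mem_right _ _ (X_mem_span_X_image.2 (Finset.mem_coe.2 hi))))
  rw [hcard] at hP hE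
  have hL' := hasProjectiveDimensionLT_of_ge (ModuleCat.of (MvPolynomial (Fin 5) K)
    (MvPolynomial (Fin 5) K ⧸ (twoTrianglesIdeal K ⊔ Ideal.span {X 0}))) 4 5 (by simp)
  exact projDim_eq_of_hasProjectiveDimensionLT (n := 3)
    ((colonComplex_shortExact (X 0) (mem_outerIdeal_iff_X_mul_mem K)
      rfl).hasProjectiveDimensionLT_X₂ 5 hP hL') _
    (nontrivial_ext_of_colon (mem_outerIdeal_iff_X_mul_mem K) rfl hL' hE)

lemma outerIdeal_mem_minimalPrimes : outerIdeal K ∈ (twoTrianglesIdeal K).minimalPrimes := by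
  refine ⟨⟨inferInstance, twoTrianglesIdeal_le_outerIdeal K⟩, fun Q ⟨hQ, hIQ⟩ hQP r hr ↦ ?_⟩
  exact (hQ.mem_or_mem (hIQ ((mem_outerIdeal_iff_X_mul_mem K r).1 hr))).resolve_left
    fun h ↦ by simpa using X_mem_span_X_image.1 (hQP h)

lemma four_le_of_radical_span_range_eq {s : ℕ} {f : Fin s → MvPolynomial (Fin 5) K}
    (hf : (Ideal.span (Set.range f)).radical = (twoTrianglesIdeal K).radical) : 4 ≤ s := by
  have hmin : outerIdeal K ∈ (Ideal.span (Set.range f)).minimalPrimes := by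
    rw [← Ideal.radical_minimalPrimes, hf, Ideal.radical_minimalPrimes]
    exact outerIdeal_mem_minimalPrimes K
  have h := (card_le_height_span_X_image (K := K) ({1, 2, 3, 4} : Finset (Fin 5))).trans
    (Ideal.height_le_card_of_mem_minimalPrimes_span (Set.finite_range f) hmin)
  have h : 4 ≤ (Set.range f).ncard := by exact_mod_cast h
  exact h.trans (by
    rw [← Set.image_univ]
    exact (Set.ncard_image_le Set.finite_univ).trans (by simp [Set.ncard_univ]))

lemma exists_radical_span_range_eq :
    ∃ f : Fin 4 → MvPolynomial (Fin 5) K,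
      (Ideal.span (Set.range f)).radical = (twoTrianglesIdeal K).radical := by
  let f : Fin 4 → MvPolynomial (Fin 5) K :=
    ![X 1 * X 2, X 0 * X 1 + X 0 * X 2, X 3 * X 4, X 0 * X 3 + X 0 * X 4]
  have hf (i : Fin 4) : f i ∈ Ideal.span (Set.range f) := Ideal.subset_span ⟨i, rfl⟩
  have key {a b c : MvPolynomial (Fin 5) K} (h₁ : b * c ∈ Ideal.span (Set.range f))
      (h₂ : a * b + a * c ∈ Ideal.span (Set.range f)) :
      a * b ∈ (Ideal.span (Set.range f)).radical ∧ a * c ∈ (Ideal.span (Set.range f)).radical := by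
    refine ⟨⟨2, ?_⟩, ⟨2, ?_⟩⟩
    · have : (a * b) ^ 2 = a * b * (a * b + a * c) - a ^ 2 * (b * c) := by ring
      exact this ▸ Ideal.sub_mem _ (Ideal.mul_mem_left _ _ h₂) (Ideal.mul_mem_left _ _ h₁)
    · have : (a * c) ^ 2 = a * c * (a * b + a * c) - a ^ 2 * (b * c) := by ring
      exact this ▸ Ideal.sub_mem _ (Ideal.mul_mem_left _ _ h₂) (Ideal.mul_mem_left _ _ h₁)
  refine ⟨f, le_antisymm (Ideal.radical_mono (Ideal.span_le.2 ?_))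
    (Ideal.radical_le_radical_iff.2 (Ideal.span_le.2 ?_))⟩
  · rintro _ ⟨i, rfl⟩
    fin_cases i
    · exact Ideal.subset_span (Or.inr (Or.inl rfl))
    · exact Ideal.add_mem _ (Ideal.subset_span (by simp)) (Ideal.subset_span (by simp))
    · exact Ideal.subset_span (by simp [f])
    · exact Ideal.add_mem _ (Ideal.subset_span (by simp)) (Ideal.subset_span (by simp))
  · rintro _ (rfl | rfl | rfl | rfl | rfl | rfl)
    · exact (key (hf 0) (hf 1)).1
    · exact Ideal.le_radical (hf 0)
    · exact (key (hf 0) (hf 1)).2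
    · exact (key (hf 2) (hf 3)).1
    · exact Ideal.le_radical (hf 2)
    · exact (key (hf 2) (hf 3)).2

lemma araRank_twoTrianglesIdeal : araRank (twoTrianglesIdeal K) = 4 :=
  le_antisymm (Nat.sInf_le (exists_radical_span_range_eq K))
    (le_csInf ⟨4, exists_radical_span_range_eq K⟩ fun _ ⟨_, hf⟩ ↦
      four_le_of_radical_span_range_eq K hf)

end TwoTriangles

/-- For the edge ideal `I(G)` of two triangles joined at a vertex, the projective
dimension of `R/I(G)` is exactly `4` and the arithmetical rank of `I(G)` is exactly `4`. -/
theorem two_triangles_pd_and_ara (K : Type) [Field K] :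
    projDim (MvPolynomial (Fin 5) K) (MvPolynomial (Fin 5) K ⧸ twoTrianglesIdeal K) =
        (4 : ℕ∞) ∧
      araRank (twoTrianglesIdeal K) = 4 :=
  ⟨projDim_quotient_twoTrianglesIdeal K, araRank_twoTrianglesIdeal K⟩
end
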